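/- arXiv:2404.07587 — 2 statements merged into one kernel-verified Lean document; each statement's English description precedes it below -/
import Mathlib

section
/- Let K > 0 and J ∈ ℝ, and assume φ_{K,J} attains its minimum over [−1,1] at exactly two points m₀ ≠ m₁ in (−1,1), each with φ_{K,J}''(m_i) > 0 (i.e., (K,J) lies on the coexistence curve γ). For i = 0,1, let A_i be an open neighborhood of m_i in (−1,1) whose closure does not contain m_{1−i}, and set W_n^{(i)} = (S_n − n·m_i)/√(n/φ_{K,J}''(m_i)). Then there exists a constant c = c(K,J) > 0 such that for i = 0,1 and all n ≥ 1, sup_{x∈ℝ} |P_{n,K,J}(W_n^{(i)} ≤ x | m_n ∈ A_i) − Φ(x)| ≤ c/√n, where the conditional probability is with respect to P_{n,K,J} and Φ is the standard normal distribution function. -/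
/-!
The magnetization only depends on the number `k` of up spins, so the conditional probability is a
quotient of sums of `levelWeight n K J k = C(n,k) exp(n (K/3 t³ + J/2 t²))`, `t = gridMag n k`
(`cubicProb_ratio`); the partition function cancels.

Stirling's formula with Robbins' error bound turns the level weight, multiplied by `normConst`
(which does not depend on `k`), into the exponential of
`-n (φ t - φ m) + (log (1 - m²) - log (1 - t²)) / 2 + stirErr n k`
(`normConst_mul_levelWeight`). With `z = √(n φ''(m)) (t - m)`, Taylor's formula at the minimizer `m`
gives `exp(-z²/2)` up to an error `O(1/√n) exp(-z²/8)` for `t` in a small ball around `m`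
(`local_estimate`). The remaining `t ∈ A` contribute an exponentially small amount
(`far_estimate`), because `φ - φ m` is bounded below on the compact set of points of
`closure A` outside the ball (`phiKJ_gap`): `closure A` avoids the other minimizer, and `±1` are
not minimizers.

The numbers `z` form a grid of mesh `h = 2 √φ''(m) / √n`, and a left-endpoint Riemann sum of a
Gaussian over such a grid is within `O(h)` of the integral (`gauss_grid`). Hence numerator and
denominator are, up to `O(1/√n)`, equal to `∫_{t ≤ x} exp(-t²/2)` and `√(2π)` (`weighted_sum`), and
taking the quotient gives the claim for large `n` (`single_phase`). For the finitely many smaller `n`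
it holds by enlarging the constant, since both terms lie in `[0, 1]`; this covers the convention
`0 / 0 = 0` when no configuration has magnetization in `A`.
-/

open MeasureTheory ProbabilityTheory Real Filter

noncomputable section

/-- The spin value `±1` associated with a Boolean. -/
def spin (b : Bool) : ℝ := if b then 1 else -1

/-- Total magnetization `S_n(x) = ∑ i, x_i`. -/
def totalMag (n : ℕ) (x : Fin n → Bool) : ℝ := ∑ i, spin (x i)

/-- Magnetization per particle `m_n(x) = S_n(x)/n`. -/
def magPP (n : ℕ) (x : Fin n → Bool) : ℝ := totalMag n x / n

/-- Boltzmann–Gibbs weight of a configuration in the cubic Curie–Weiss model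
(the reference factor `2^{-n}` is constant and cancels upon normalization). -/
def cubicWeight (n : ℕ) (K J : ℝ) (x : Fin n → Bool) : ℝ :=
  Real.exp (n * (K / 3 * (magPP n x) ^ 3 + J / 2 * (magPP n x) ^ 2))

/-- The cubic Curie–Weiss Boltzmann–Gibbs probability measure `P_{n,K,J}`. -/
def cubicMeasure (n : ℕ) (K J : ℝ) : Measure (Fin n → Bool) :=
  (∑ x : Fin n → Bool, ENNReal.ofReal (cubicWeight n K J x))⁻¹ •
    ∑ x : Fin n → Bool, ENNReal.ofReal (cubicWeight n K J x) • Measure.dirac x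

/-- The probability of an event under `P_{n,K,J}`, as a real number. -/
def cubicProb (n : ℕ) (K J : ℝ) (s : Set (Fin n → Bool)) : ℝ :=
  (cubicMeasure n K J s).toReal

/-- The binary relative entropy `I(m)`. -/
def binEnt (m : ℝ) : ℝ :=
  (1 - m) / 2 * Real.log ((1 - m) / 2) + (1 + m) / 2 * Real.log ((1 + m) / 2)

/-- The function `φ_{K,J}(x) = I(x) − (K/3)x³ − (J/2)x²`. -/
def phiKJ (K J : ℝ) (x : ℝ) : ℝ := binEnt x - K / 3 * x ^ 3 - J / 2 * x ^ 2

/-- The standard normal cumulative distribution function. -/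
def stdNormalCDF (z : ℝ) : ℝ :=
  (ProbabilityTheory.gaussianReal 0 1 (Set.Iic z)).toReal

end

/-! ### Reduction to sums over the number of up spins -/

/-- Magnetization per particle of a configuration of `n` spins with `k` spins up. -/
noncomputable def gridMag (n k : ℕ) : ℝ := (2 * k - n) / n

/-- Total (unnormalized) Gibbs weight of the configurations of `n` spins with `k` spins up. -/
noncomputable def levelWeight (n : ℕ) (K J : ℝ) (k : ℕ) : ℝ :=
  n.choose k * Real.exp (n * (K / 3 * (gridMag n k) ^ 3 + J / 2 * (gridMag n k) ^ 2))

lemma totalMag_eq_card (n : ℕ) (y : Fin n → Bool) :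
    totalMag n y = 2 * ((Finset.univ.filter fun i => y i = true).card : ℝ) - n := by
  have h : ∀ b : Bool, spin b = 2 * (if b = true then (1 : ℝ) else 0) - 1 := by
    intro b; cases b <;> norm_num [spin]
  unfold totalMag
  simp_rw [h]
  rw [Finset.sum_sub_distrib, ← Finset.mul_sum, Finset.sum_boole]
  simp

lemma magPP_eq_gridMag (n : ℕ) (y : Fin n → Bool) :
    magPP n y = gridMag n (Finset.univ.filter fun i => y i = true).card := by
  rw [magPP, totalMag_eq_card, gridMag]

/-- Summing a function of the number of up spins over all configurations. -/
lemma sum_config_eq (n : ℕ) (F : ℕ → ℝ) :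
    ∑ y : Fin n → Bool, F (Finset.univ.filter fun i => y i = true).card
      = ∑ k ∈ Finset.range (n + 1), (n.choose k : ℝ) * F k := by
  have h := Finset.sum_powerset_apply_card F (x := (Finset.univ : Finset (Fin n)))
  rw [Finset.powerset_univ] at h
  simp only [Finset.card_univ, Fintype.card_fin, nsmul_eq_mul] at h
  rw [← h]
  refine Finset.sum_bij' (fun y _ => Finset.univ.filter fun i => y i = true)
    (fun s _ => fun i => decide (i ∈ s)) ?_ ?_ ?_ ?_ ?_
  · intros; simp
  · intros; simp
  · intro y _; funext i; simp
  · intro s _; ext i; simp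
  · intros; rfl

lemma cubicProb_magPP (n : ℕ) (K J : ℝ) (B : Set ℝ) [DecidablePred fun k => gridMag n k ∈ B] :
    cubicProb n K J {y | magPP n y ∈ B}
      = (∑ y : Fin n → Bool, ENNReal.ofReal (cubicWeight n K J y)).toReal⁻¹ *
        ∑ k ∈ (Finset.range (n + 1)).filter (fun k => gridMag n k ∈ B), levelWeight n K J k := by
  have h := sum_config_eq n (fun k => if gridMag n k ∈ B then
    Real.exp (n * (K / 3 * (gridMag n k) ^ 3 + J / 2 * (gridMag n k) ^ 2)) else 0)
  rw [cubicProb, cubicMeasure]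
  simp only [Measure.smul_apply, Measure.coe_finsetSum, Finset.sum_apply, smul_eq_mul,
    ENNReal.toReal_mul, ENNReal.toReal_inv]
  congr 1
  rw [Finset.sum_filter, ENNReal.toReal_sum]
  · refine Eq.trans (Eq.trans (Finset.sum_congr rfl fun y _ => ?_) h)
      (Finset.sum_congr rfl fun k _ => ?_)
    · rw [Measure.dirac_apply' _ (MeasurableSet.of_discrete)]
      have hmag := magPP_eq_gridMag n y
      by_cases hy : magPP n y ∈ B
      · rw [if_pos (hmag ▸ hy), ← hmag]
        simp [hy, cubicWeight, ENNReal.toReal_ofReal (Real.exp_pos _).le]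
      · rw [if_neg (hmag ▸ hy)]
        simp [hy]
    · simp only [levelWeight, mul_ite, mul_zero]
  · intro y _
    refine ENNReal.mul_ne_top ENNReal.ofReal_ne_top ?_
    exact measure_ne_top _ _

/-- The conditional probability is a quotient of sums over the number of up spins; the
partition function cancels. -/
lemma cubicProb_ratio (n : ℕ) (K J : ℝ) (B A : Set ℝ) [DecidablePred fun k => gridMag n k ∈ B]
    [DecidablePred fun k => gridMag n k ∈ A] :
    cubicProb n K J {y | magPP n y ∈ B} / cubicProb n K J {y | magPP n y ∈ A}
      = (∑ k ∈ (Finset.range (n + 1)).filter (fun k => gridMag n k ∈ B), levelWeight n K J k) /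
        ∑ k ∈ (Finset.range (n + 1)).filter (fun k => gridMag n k ∈ A), levelWeight n K J k := by
  rw [cubicProb_magPP, cubicProb_magPP, mul_div_mul_left]
  have hne : ∑ y : Fin n → Bool, ENNReal.ofReal (cubicWeight n K J y) ≠ 0 := by
    intro h0
    have h1 := (Finset.sum_eq_zero_iff.1 h0) (fun _ => true) (Finset.mem_univ _)
    rw [ENNReal.ofReal_eq_zero] at h1
    exact absurd h1 (not_le.2 (Real.exp_pos _))
  have hnt : ∑ y : Fin n → Bool, ENNReal.ofReal (cubicWeight n K J y) ≠ ⊤ :=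
    ENNReal.sum_ne_top.2 fun y _ => ENNReal.ofReal_ne_top
  exact inv_ne_zero (ENNReal.toReal_ne_zero.2 ⟨hne, hnt⟩)

/-! ### Stirling's formula for the level weights -/

/-- `√π ≤ stirlingSeq n ≤ √π · exp (1 / (12 n))`, in logarithmic form. -/
lemma log_stirlingSeq_bounds {n : ℕ} (hn : n ≠ 0) :
    Real.log √π ≤ Real.log (Stirling.stirlingSeq n) ∧
      Real.log (Stirling.stirlingSeq n) ≤ Real.log √π + 1 / (12 * n) := by
  constructor
  · exact Real.log_le_log (by positivity) (Stirling.sqrt_pi_le_stirlingSeq hn)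
  · -- `log (stirlingSeq i) - 1 / (12 i)` increases to `log √π`.
    have hmono : Monotone fun j : ℕ =>
        Real.log (Stirling.stirlingSeq (j + 1)) - 1 / (12 * ((j + 1 : ℕ) : ℝ)) := by
      refine monotone_nat_of_le_succ fun j => ?_
      have h := Stirling.log_stirlingSeq_sdiff_le (j + 1)
      have e : 1 / (12 * ((j + 1 : ℕ) : ℝ)) - 1 / (12 * ((j + 1 + 1 : ℕ) : ℝ))
          = 1 / (12 * ((j + 1 : ℕ) : ℝ) * (((j + 1 : ℕ) : ℝ) + 1)) := by
        push_cast
        field_simp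
        ring
      linarith
    have hlim : Tendsto (fun j : ℕ =>
        Real.log (Stirling.stirlingSeq (j + 1)) - 1 / (12 * ((j + 1 : ℕ) : ℝ))) atTop
        (nhds (Real.log √π - 0)) := by
      refine Tendsto.sub ?_ ?_
      · exact ((Stirling.tendsto_stirlingSeq_sqrt_pi.log (by positivity)).comp
          (tendsto_add_atTop_nat 1))
      · have h1 := (tendsto_one_div_add_atTop_nhds_zero_nat (𝕜 := ℝ)).const_mul (1 / 12)
        rw [mul_zero] at h1
        refine h1.congr fun j => ?_
        push_cast
        field_simp
    obtain ⟨j, rfl⟩ := Nat.exists_eq_succ_of_ne_zero hn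
    have := hmono.ge_of_tendsto hlim j
    simp only [Nat.succ_eq_add_one] at *
    linarith

/-- The error made in replacing the factorials of `n.choose k` by Stirling's formula. -/
noncomputable def stirErr (n k : ℕ) : ℝ :=
  Real.log √π + Real.log (Stirling.stirlingSeq n) - Real.log (Stirling.stirlingSeq k)
    - Real.log (Stirling.stirlingSeq (n - k))

lemma stirErr_le {n k : ℕ} (hk : 1 ≤ k) (hkn : k + 1 ≤ n) : stirErr n k ≤ 1 := by
  have h1 := log_stirlingSeq_bounds (n := n) (by omega)
  have h2 := log_stirlingSeq_bounds (n := k) (by omega)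
  have h3 := log_stirlingSeq_bounds (n := n - k) (by omega)
  have h4 : 1 / (12 * (n : ℝ)) ≤ 1 := by
    have : (1 : ℝ) ≤ n := by exact_mod_cast (by omega : 1 ≤ n)
    rw [div_le_one (by positivity)]; linarith
  unfold stirErr
  linarith

lemma abs_stirErr_le {n k : ℕ} (hk : 1 ≤ k) (hkn : k + 1 ≤ n) :
    |stirErr n k| ≤ 1 / n + 1 / k + 1 / ((n - k : ℕ) : ℝ) := by
  have h1 := log_stirlingSeq_bounds (n := n) (by omega)
  have h2 := log_stirlingSeq_bounds (n := k) (by omega)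
  have h3 := log_stirlingSeq_bounds (n := n - k) (by omega)
  have key : ∀ j : ℕ, 1 / (12 * (j : ℝ)) ≤ 1 / j ∧ 0 ≤ 1 / (j : ℝ) := by
    intro j
    have h0 : 0 ≤ 1 / (j : ℝ) := by positivity
    refine ⟨?_, h0⟩
    have : 1 / (12 * (j : ℝ)) = 1 / 12 * (1 / j) := by ring
    rw [this]; linarith
  have k1 := key n
  have k2 := key k
  have k3 := key (n - k)
  unfold stirErr
  rw [abs_le]
  constructor <;> linarith

lemma gridMag_bounds {n k : ℕ} (hk : 1 ≤ k) (hkn : k + 1 ≤ n) :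
    1 + gridMag n k = 2 * k / n ∧ 1 - gridMag n k = 2 * ((n - k : ℕ) : ℝ) / n := by
  have hn : (n : ℝ) ≠ 0 := by exact_mod_cast (by omega : n ≠ 0)
  rw [Nat.cast_sub (by omega)]
  unfold gridMag
  constructor <;> field_simp <;> ring

/-- Normalization making `levelWeight` comparable to the Gaussian density at the grid points. -/
noncomputable def normConst (n : ℕ) (K J m : ℝ) : ℝ :=
  Real.exp (n * phiKJ K J m + (Real.log n + Real.log (1 - m ^ 2) + Real.log π
    - Real.log 2) / 2)

/-- Exact exponential form of the normalized level weight. -/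
lemma normConst_mul_levelWeight {n k : ℕ} (K J m : ℝ) (hk : 1 ≤ k) (hkn : k + 1 ≤ n) :
    normConst n K J m * levelWeight n K J k
      = Real.exp (stirErr n k
        + (Real.log (1 - m ^ 2) - Real.log (1 - gridMag n k ^ 2)) / 2
        - n * (phiKJ K J (gridMag n k) - phiKJ K J m)) := by
  have hk0 : (0 : ℝ) < k := by exact_mod_cast hk
  have hn0 : (0 : ℝ) < n := by exact_mod_cast (by omega : 0 < n)
  have hl0 : (0 : ℝ) < ((n - k : ℕ) : ℝ) := by exact_mod_cast (by omega : 0 < n - k)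
  have hc : (0 : ℝ) < n.choose k := by exact_mod_cast Nat.choose_pos (by omega)
  have hsum : (k : ℝ) + ((n - k : ℕ) : ℝ) = n := by
    rw [Nat.cast_sub (by omega)]; ring
  obtain ⟨b1, b2⟩ := gridMag_bounds hk hkn
  unfold normConst levelWeight
  set t := gridMag n k with ht
  set l : ℝ := ((n - k : ℕ) : ℝ) with hl
  rw [← Real.exp_log hc, ← Real.exp_add, ← Real.exp_add]
  congr 1
  have hchoose : Real.log (n.choose k) = Real.log (n.factorial) - Real.log (k.factorial)
      - Real.log ((n - k).factorial) := by
    have h : ((n.choose k : ℕ) : ℝ) * k.factorial * (n - k).factorial = n.factorial := by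
      exact_mod_cast Nat.choose_mul_factorial_mul_factorial (by omega : k ≤ n)
    rw [← h, Real.log_mul (by positivity) (by positivity), Real.log_mul (by positivity)
      (by positivity)]
    ring
  have hn := Stirling.log_stirlingSeq_formula n
  have hk' := Stirling.log_stirlingSeq_formula k
  have hl' := Stirling.log_stirlingSeq_formula (n - k)
  rw [← hl] at hl'
  rw [Real.log_div hn0.ne' (Real.exp_pos 1).ne', Real.log_exp, Real.log_mul two_ne_zero hn0.ne']
    at hn
  rw [Real.log_div hk0.ne' (Real.exp_pos 1).ne', Real.log_exp, Real.log_mul two_ne_zero hk0.ne']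
    at hk'
  rw [Real.log_div hl0.ne' (Real.exp_pos 1).ne', Real.log_exp, Real.log_mul two_ne_zero hl0.ne']
    at hl'
  have hlogt : Real.log (1 - t ^ 2) = 2 * Real.log 2 + Real.log k + Real.log l
      - 2 * Real.log n := by
    have : 1 - t ^ 2 = (2 * k / n) * (2 * l / n) := by rw [← b1, ← b2]; ring
    rw [this, Real.log_mul (by positivity) (by positivity), Real.log_div (by positivity)
      (by positivity), Real.log_div (by positivity) (by positivity),
      Real.log_mul (by positivity) (by positivity), Real.log_mul (by positivity) (by positivity)]
    ring
  have hent : n * binEnt t = l * (Real.log l - Real.log n) + k * (Real.log k - Real.log n) := by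
    unfold binEnt
    have e1 : (1 - t) / 2 = l / n := by rw [b2]; ring
    have e2 : (1 + t) / 2 = k / n := by rw [b1]; ring
    rw [e1, e2, Real.log_div (by positivity) (by positivity), Real.log_div (by positivity)
      (by positivity)]
    field_simp
  have hpi : Real.log √π = Real.log π / 2 := Real.log_sqrt (by positivity)
  have hphi : n * phiKJ K J t = n * binEnt t - n * (K / 3 * t ^ 3 + J / 2 * t ^ 2) := by
    unfold phiKJ; ring
  rw [hchoose, stirErr, hlogt, hpi, mul_sub, hphi, hent, hn, hk', hl']
  rw [← hsum]
  ring

/-! ### Estimates on `φ` and on the level weights -/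

lemma continuous_phiKJ (K J : ℝ) : Continuous (phiKJ K J) := by
  have h1 : Continuous fun x : ℝ => (1 - x) / 2 * Real.log ((1 - x) / 2) :=
    Real.continuous_mul_log.comp (by fun_prop : Continuous fun x : ℝ => (1 - x) / 2)
  have h2 : Continuous fun x : ℝ => (1 + x) / 2 * Real.log ((1 + x) / 2) :=
    Real.continuous_mul_log.comp (by fun_prop : Continuous fun x : ℝ => (1 + x) / 2)
  have h3 : Continuous binEnt := h1.add h2
  unfold phiKJ
  fun_prop

lemma contDiffOn_phiKJ (K J : ℝ) : ContDiffOn ℝ 3 (phiKJ K J) (Set.Ioo (-1) 1) := by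
  have h1 : ContDiffOn ℝ 3 (fun x : ℝ => Real.log ((1 - x) / 2)) (Set.Ioo (-1) 1) := by
    refine ContDiffOn.log (by fun_prop) fun x hx => ?_
    have := hx.2
    have : 0 < (1 - x) / 2 := by linarith
    exact this.ne'
  have h2 : ContDiffOn ℝ 3 (fun x : ℝ => Real.log ((1 + x) / 2)) (Set.Ioo (-1) 1) := by
    refine ContDiffOn.log (by fun_prop) fun x hx => ?_
    have := hx.1
    have : 0 < (1 + x) / 2 := by linarith
    exact this.ne'
  unfold phiKJ binEnt
  fun_prop

/-- Second order Taylor expansion of `φ` at an interior minimizer, with cubic remainder. -/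
lemma phiKJ_taylor (K J m : ℝ) (hm : m ∈ Set.Ioo (-1 : ℝ) 1)
    (hmin : ∀ y ∈ Set.Icc (-1 : ℝ) 1, phiKJ K J m ≤ phiKJ K J y) :
    ∃ C > 0, ∃ ρ > 0, ∀ t, |t - m| < ρ →
      |phiKJ K J t - phiKJ K J m - iteratedDeriv 2 (phiKJ K J) m / 2 * (t - m) ^ 2|
        ≤ C * |t - m| ^ 3 := by
  set f := phiKJ K J with hf
  have hnhds : Set.Ioo (-1 : ℝ) 1 ∈ nhds m := Ioo_mem_nhds hm.1 hm.2
  have hT := taylor_isLittleO (convex_Ioo (-1 : ℝ) 1) hm (n := 3) (contDiffOn_phiKJ K J)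
  rw [isOpen_Ioo.nhdsWithin_eq hm] at hT
  have hloc : IsLocalMin f m := by
    filter_upwards [hnhds] with y hy
    exact hmin y ⟨hy.1.le, hy.2.le⟩
  have hd0 : deriv f m = 0 := hloc.deriv_eq_zero
  have hO : (fun t => f t - f m - iteratedDeriv 2 f m / 2 * (t - m) ^ 2)
      =O[nhds m] fun t => (t - m) ^ 3 := by
    have h2 : (fun t => iteratedDeriv 3 f m / 6 * (t - m) ^ 3)
        =O[nhds m] fun t => (t - m) ^ 3 := Asymptotics.isBigO_const_mul_self _ _ _
    refine (hT.isBigO.add h2).congr_left fun t => ?_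
    simp only [taylor_within_apply, Finset.sum_range_succ, Finset.sum_range_zero,
      iteratedDerivWithin_of_isOpen isOpen_Ioo hm, iteratedDeriv_zero, iteratedDeriv_one,
      smul_eq_mul, ← hf, hd0]
    norm_num [Nat.factorial]
    ring
  obtain ⟨C, hC, hb⟩ := hO.exists_pos
  rw [Asymptotics.IsBigOWith] at hb
  obtain ⟨ρ, hρ, h⟩ := Metric.eventually_nhds_iff.1 hb
  refine ⟨C, hC, ρ, hρ, fun t ht => ?_⟩
  have := h (y := t) (by rwa [Real.dist_eq])
  simpa [Real.norm_eq_abs, abs_pow] using this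

lemma log_one_sub_sq_lipschitz (m : ℝ) (hm : m ∈ Set.Ioo (-1 : ℝ) 1) :
    ∃ C > 0, ∃ ρ > 0, ∀ t, |t - m| < ρ →
      |Real.log (1 - m ^ 2) - Real.log (1 - t ^ 2)| ≤ C * |t - m| := by
  have hpos : 1 - m ^ 2 ≠ 0 := by nlinarith [hm.1, hm.2]
  have hd : DifferentiableAt ℝ (fun t : ℝ => Real.log (1 - t ^ 2)) m :=
    DifferentiableAt.log (by fun_prop) hpos
  obtain ⟨C, hC, hb⟩ := hd.isBigO_sub.exists_pos
  rw [Asymptotics.IsBigOWith] at hb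
  obtain ⟨ρ, hρ, h⟩ := Metric.eventually_nhds_iff.1 hb
  refine ⟨C, hC, ρ, hρ, fun t ht => ?_⟩
  have := h (y := t) (by rwa [Real.dist_eq])
  rw [abs_sub_comm]
  simpa [Real.norm_eq_abs] using this

/-- Away from the minimizer, but inside `A`, the function `φ` exceeds its minimum by a
fixed amount. -/
lemma phiKJ_gap (K J m : ℝ) (A : Set ℝ) (hAsub : A ⊆ Set.Ioo (-1 : ℝ) 1)
    (hmin : ∀ y ∈ Set.Icc (-1 : ℝ) 1, phiKJ K J m ≤ phiKJ K J y)
    (huniq : ∀ y ∈ closure A, phiKJ K J y = phiKJ K J m → y = m) {δ : ℝ} (hδ : 0 < δ) :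
    ∃ η > 0, ∀ t ∈ A, δ ≤ |t - m| → η ≤ phiKJ K J t - phiKJ K J m := by
  have hcl : closure A ⊆ Set.Icc (-1 : ℝ) 1 :=
    closure_minimal (hAsub.trans Set.Ioo_subset_Icc_self) isClosed_Icc
  have hcomp : IsCompact (closure A ∩ {t | δ ≤ |t - m|}) :=
    (isCompact_Icc.of_isClosed_subset isClosed_closure hcl).inter_right
      (isClosed_le continuous_const (by fun_prop))
  rcases (closure A ∩ {t | δ ≤ |t - m|}).eq_empty_or_nonempty with he | hne
  · refine ⟨1, one_pos, fun t ht hd => ?_⟩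
    have : t ∈ closure A ∩ {t | δ ≤ |t - m|} := ⟨subset_closure ht, hd⟩
    rw [he] at this
    exact this.elim
  · obtain ⟨s, hs, hsm⟩ := hcomp.exists_isMinOn hne (continuous_phiKJ K J).continuousOn
    refine ⟨phiKJ K J s - phiKJ K J m, ?_, fun t ht hd => ?_⟩
    · rcases (hmin s (hcl hs.1)).lt_or_eq with h | h
      · exact sub_pos.2 h
      · have := huniq s hs.1 h.symm
        have h2 : δ ≤ |s - m| := hs.2
        rw [this] at h2
        simp at h2
        linarith
    · have := isMinOn_iff.1 hsm t ⟨subset_closure ht, hd⟩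
      linarith

lemma abs_exp_sub_one_le_mul_exp (E : ℝ) : |Real.exp E - 1| ≤ |E| * Real.exp |E| := by
  have h1 : 1 ≤ Real.exp |E| := Real.one_le_exp (abs_nonneg E)
  rw [abs_le]
  constructor
  · have h2 := Real.add_one_le_exp E
    have h3 : -|E| ≤ E := neg_abs_le E
    nlinarith [abs_nonneg E]
  · have h2 := Real.add_one_le_exp (-E)
    have h3 : Real.exp (-E) * Real.exp E = 1 := by rw [← Real.exp_add]; simp
    have h4 : Real.exp E ≤ Real.exp |E| := Real.exp_le_exp.2 (le_abs_self E)
    have h5 : Real.exp E - 1 ≤ E * Real.exp E := by nlinarith [Real.exp_pos E]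
    have h6 : E * Real.exp E ≤ |E| * Real.exp E :=
      mul_le_mul_of_nonneg_right (le_abs_self E) (Real.exp_pos E).le
    have h7 : |E| * Real.exp E ≤ |E| * Real.exp |E| :=
      mul_le_mul_of_nonneg_left h4 (abs_nonneg E)
    linarith

/-- A cubic polynomial is absorbed by a Gaussian factor. -/
lemma cubic_le_exp_sq {lam : ℝ} (hlam : 0 < lam) (u : ℝ) :
    u ^ 3 + u + 1 ≤ 3 * (1 + 8 / lam) ^ 2 * Real.exp (lam * u ^ 2 / 4) := by
  have h1 : 1 + u ^ 2 ≤ (1 + 8 / lam) * Real.exp (lam * u ^ 2 / 8) := by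
    have h2 := Real.add_one_le_exp (lam * u ^ 2 / 8)
    have h3 : 1 + u ^ 2 ≤ (1 + 8 / lam) * (lam * u ^ 2 / 8 + 1) := by
      have : (1 + 8 / lam) * (lam * u ^ 2 / 8 + 1) = lam * u ^ 2 / 8 + 1 + u ^ 2 + 8 / lam := by
        field_simp
        ring
      rw [this]
      have : 0 ≤ lam * u ^ 2 / 8 := by positivity
      have : 0 ≤ 8 / lam := by positivity
      linarith
    exact h3.trans (mul_le_mul_of_nonneg_left h2 (by positivity))
  have h4 : (1 + u ^ 2) ^ 2 ≤ ((1 + 8 / lam) * Real.exp (lam * u ^ 2 / 8)) ^ 2 :=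
    pow_le_pow_left₀ (by positivity) h1 2
  have h5 : Real.exp (lam * u ^ 2 / 8) ^ 2 = Real.exp (lam * u ^ 2 / 4) := by
    rw [← Real.exp_nat_mul]; congr 1; push_cast; ring
  rw [mul_pow, h5] at h4
  have h6 : u ^ 3 + u + 1 ≤ 3 * (1 + u ^ 2) ^ 2 := by
    nlinarith [sq_nonneg (u ^ 2 - u), sq_nonneg (u - 1), sq_nonneg (u^2), sq_nonneg u]
  linarith

set_option maxHeartbeats 1000000 in
/-- Local limit estimate: near the minimizer the normalized level weights agree with the
Gaussian density up to `O(1/√n)`, with a Gaussian-decaying error. -/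
lemma local_estimate (K J m : ℝ) (hm : m ∈ Set.Ioo (-1 : ℝ) 1)
    (hmin : ∀ y ∈ Set.Icc (-1 : ℝ) 1, phiKJ K J m ≤ phiKJ K J y)
    (hlam : 0 < iteratedDeriv 2 (phiKJ K J) m) (A : Set ℝ) (hA : A ∈ nhds m) :
    ∃ C > 0, ∃ δ > 0, (∀ t, |t - m| < δ → t ∈ A ∧ t ∈ Set.Ioo (-1 : ℝ) 1) ∧
      ∀ n k : ℕ, 1 ≤ n → |gridMag n k - m| < δ →
      |normConst n K J m * levelWeight n K J k - Real.exp (-(1 / 2) *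
        (√(n * iteratedDeriv 2 (phiKJ K J) m) * (gridMag n k - m)) ^ 2)| ≤
      C / √n * Real.exp (-(1 / 8) *
        (√(n * iteratedDeriv 2 (phiKJ K J) m) * (gridMag n k - m)) ^ 2) := by
  obtain ⟨C1, hC1, ρ1, hρ1, h1⟩ := phiKJ_taylor K J m hm hmin
  obtain ⟨C2, hC2, ρ2, hρ2, h2⟩ := log_one_sub_sq_lipschitz m hm
  obtain ⟨ρ3, hρ3, h3⟩ := Metric.mem_nhds_iff.1 (Filter.inter_mem hA (Ioo_mem_nhds hm.1 hm.2))
  set lam := iteratedDeriv 2 (phiKJ K J) m with hlamdef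
  -- `r` bounds the distance of the grid magnetization from `±1` from below.
  obtain ⟨r, hr, hr1, hr2⟩ : ∃ r > 0, 2 * r ≤ 1 + m ∧ 2 * r ≤ 1 - m :=
    ⟨min (1 + m) (1 - m) / 2, by
      have := hm.1; have := hm.2
      have : 0 < min (1 + m) (1 - m) := lt_min (by linarith) (by linarith)
      positivity, by have := min_le_left (1 + m) (1 - m); linarith,
      by have := min_le_right (1 + m) (1 - m); linarith⟩
  set C0 := C1 + C2 + (1 + 4 / r) with hC0
  have hC0p : 0 < C0 := by positivity
  obtain ⟨δ, hδ, d1, d2, d3, d4, d5, d6⟩ : ∃ δ > 0, δ ≤ ρ1 ∧ δ ≤ ρ2 ∧ δ ≤ ρ3 ∧ δ ≤ r ∧ δ ≤ 1 ∧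
      δ ≤ lam / (8 * C0) := by
    refine ⟨min ρ1 (min ρ2 (min ρ3 (min r (min 1 (lam / (8 * C0)))))), ?_, ?_, ?_, ?_, ?_, ?_, ?_⟩
    · have : 0 < lam / (8 * C0) := by positivity
      exact lt_min hρ1 (lt_min hρ2 (lt_min hρ3 (lt_min hr (lt_min one_pos this))))
    all_goals simp
  refine ⟨C0 * (3 * (1 + 8 / lam) ^ 2) * Real.exp (2 * C0), by positivity, δ, hδ, ?_, ?_⟩
  · intro t ht
    exact h3 (by rw [Metric.mem_ball, Real.dist_eq]; linarith)
  intro n k hn ht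
  set t := gridMag n k with htdef
  have hn0 : (0 : ℝ) < n := by exact_mod_cast hn
  have hn1 : (1 : ℝ) ≤ n := by exact_mod_cast hn
  have habs := abs_lt.1 ht
  have htn : t * n = 2 * k - n := by rw [htdef, gridMag]; field_simp
  -- Both spin counts are at least `r n / 2`.
  have hkr : r * n / 2 ≤ k := by nlinarith
  have hkr' : (k : ℝ) ≤ n - r * n / 2 := by nlinarith
  have hk : 1 ≤ k := by
    have : (0 : ℝ) < k := lt_of_lt_of_le (by positivity) hkr
    exact_mod_cast this
  have hkn : k + 1 ≤ n := by
    have : (k : ℝ) < n := lt_of_le_of_lt hkr' (by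
      have : 0 < r * n / 2 := by positivity
      linarith)
    exact_mod_cast this
  have hl : r * n / 2 ≤ ((n - k : ℕ) : ℝ) := by
    rw [Nat.cast_sub (by omega)]; linarith
  rw [normConst_mul_levelWeight K J m hk hkn, ← htdef]
  set d := |t - m| with hd
  have hd0 : 0 ≤ d := abs_nonneg _
  have hdsq : d ^ 2 = (t - m) ^ 2 := sq_abs _
  have hz2 : (√(n * lam) * (t - m)) ^ 2 = lam * (n * d ^ 2) := by
    rw [mul_pow, Real.sq_sqrt (by positivity), hdsq]; ring
  have hS : |stirErr n k| ≤ (1 + 4 / r) * (1 / n) := by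
    refine (abs_stirErr_le hk hkn).trans ?_
    have e1 : 1 / (k : ℝ) ≤ 1 / (r * n / 2) := one_div_le_one_div_of_le (by positivity) hkr
    have e2 : 1 / ((n - k : ℕ) : ℝ) ≤ 1 / (r * n / 2) := one_div_le_one_div_of_le (by positivity) hl
    have e3 : (1 + 4 / r) * (1 / (n : ℝ)) = 1 / n + 1 / (r * n / 2) + 1 / (r * n / 2) := by
      field_simp; ring
    linarith
  have hT := h1 t (by linarith)
  have hL := h2 t (by linarith)
  rw [← hd] at hT hL
  set E := stirErr n k + (Real.log (1 - m ^ 2) - Real.log (1 - t ^ 2)) / 2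
    - n * (phiKJ K J t - phiKJ K J m - lam / 2 * (t - m) ^ 2) with hE
  have hEbound : |E| ≤ C0 * (n * d ^ 3 + d + 1 / n) := by
    have a1 : |E| ≤ |stirErr n k| + |(Real.log (1 - m ^ 2) - Real.log (1 - t ^ 2)) / 2|
        + |n * (phiKJ K J t - phiKJ K J m - lam / 2 * (t - m) ^ 2)| :=
      (abs_sub _ _).trans (add_le_add_left (abs_add_le _ _) _)
    rw [abs_div, abs_mul, abs_of_pos hn0, abs_two] at a1
    have a2 : n * |phiKJ K J t - phiKJ K J m - lam / 2 * (t - m) ^ 2| ≤ n * (C1 * d ^ 3) :=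
      mul_le_mul_of_nonneg_left hT hn0.le
    have p1 : 0 ≤ n * d ^ 3 := by positivity
    have p2 : 0 ≤ 1 / (n : ℝ) := by positivity
    have p3 : 0 ≤ 4 / r := by positivity
    have q0 := abs_nonneg (Real.log (1 - m ^ 2) - Real.log (1 - t ^ 2))
    have b1 : 0 ≤ (C2 + (1 + 4 / r)) * (n * d ^ 3) := by positivity
    have b2 : 0 ≤ (C1 + (1 + 4 / r)) * d := by positivity
    have b3 : 0 ≤ (C1 + C2) * (1 / n) := by positivity
    rw [hC0]
    linarith
  have hcub : C0 * (n * d ^ 3) ≤ lam * (n * d ^ 2) / 8 := by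
    have : C0 * d ≤ lam / 8 := by
      have : d ≤ lam / (8 * C0) := by linarith
      calc C0 * d ≤ C0 * (lam / (8 * C0)) := mul_le_mul_of_nonneg_left this hC0p.le
        _ = lam / 8 := by field_simp
    have := mul_le_mul_of_nonneg_right this (by positivity : 0 ≤ n * d ^ 2)
    linarith
  have hEexp : |E| ≤ lam * (n * d ^ 2) / 8 + 2 * C0 := by
    have q1 : d ≤ 1 := by linarith
    have q2 : 1 / (n : ℝ) ≤ 1 := by rw [div_le_one hn0]; exact hn1
    have q3 : C0 * (d + 1 / n) ≤ C0 * 2 := mul_le_mul_of_nonneg_left (by linarith) hC0p.le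
    linarith
  set u := √n * d with hu
  have hs0 : 0 < √(n : ℝ) := Real.sqrt_pos.2 hn0
  have hs2 : √(n : ℝ) ^ 2 = n := Real.sq_sqrt hn0.le
  have hu2 : u ^ 2 = n * d ^ 2 := by rw [hu, mul_pow, hs2]
  have hEu : |E| ≤ C0 / √n * (u ^ 3 + u + 1) := by
    refine hEbound.trans ?_
    rw [div_mul_eq_mul_div, le_div_iff₀ hs0, mul_assoc]
    refine mul_le_mul_of_nonneg_left ?_ hC0p.le
    have f1 : n * d ^ 3 * √n = u ^ 3 := by rw [hu, mul_pow, pow_succ √(n : ℝ) 2, hs2]; ring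
    have f2 : 1 / (n : ℝ) * √n ≤ 1 := by
      rw [one_div_mul_eq_div, div_le_one hn0]
      exact (Real.sqrt_le_left (by positivity)).2 (by nlinarith)
    have f3 : d * √n = u := mul_comm _ _
    rw [add_mul, add_mul, f1, f3]
    linarith
  have hcubic := cubic_le_exp_sq hlam u
  rw [hz2]
  have hsplit : Real.exp (stirErr n k + (Real.log (1 - m ^ 2) - Real.log (1 - t ^ 2)) / 2
      - n * (phiKJ K J t - phiKJ K J m))
      = Real.exp (-(1 / 2) * (lam * (n * d ^ 2))) * Real.exp E := by
    rw [← Real.exp_add]; congr 1; rw [hE, hdsq]; ring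
  rw [hsplit, ← mul_sub_one, abs_mul, abs_of_pos (Real.exp_pos _)]
  calc Real.exp (-(1 / 2) * (lam * (n * d ^ 2))) * |Real.exp E - 1|
      ≤ Real.exp (-(1 / 2) * (lam * (n * d ^ 2))) * (|E| * Real.exp |E|) :=
        mul_le_mul_of_nonneg_left (abs_exp_sub_one_le_mul_exp E) (Real.exp_pos _).le
    _ ≤ Real.exp (-(1 / 2) * (lam * (n * d ^ 2))) *
        ((C0 / √n * (3 * (1 + 8 / lam) ^ 2 * Real.exp (lam * u ^ 2 / 4))) *
          Real.exp (lam * (n * d ^ 2) / 8 + 2 * C0)) := by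
        gcongr
        exact hEu.trans (mul_le_mul_of_nonneg_left hcubic (by positivity))
    _ = C0 * (3 * (1 + 8 / lam) ^ 2) * Real.exp (2 * C0) / √n *
        (Real.exp (-(1 / 2) * (lam * (n * d ^ 2))) * Real.exp (lam * u ^ 2 / 4) *
          Real.exp (lam * (n * d ^ 2) / 8)) := by
        rw [Real.exp_add]; ring
    _ = _ := by
        rw [← Real.exp_add, ← Real.exp_add, hu2]
        congr 2
        ring

/-- Away from the minimizer the normalized level weights are exponentially small. -/
lemma far_estimate (K J m : ℝ) (hm : m ∈ Set.Ioo (-1 : ℝ) 1) {n k : ℕ} (hn : 1 ≤ n)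
    (hI : gridMag n k ∈ Set.Ioo (-1 : ℝ) 1)
    {η : ℝ} (hη : η ≤ phiKJ K J (gridMag n k) - phiKJ K J m) :
    normConst n K J m * levelWeight n K J k ≤ Real.exp 1 * n * Real.exp (-(n * η)) := by
  have hn0 : (0 : ℝ) < n := by exact_mod_cast hn
  have hn1 : (1 : ℝ) ≤ n := by exact_mod_cast hn
  have htn : gridMag n k * n = 2 * k - n := by rw [gridMag]; field_simp
  have hk : 1 ≤ k := by
    have : (0 : ℝ) < k := by nlinarith [hI.1]
    exact_mod_cast this
  have hkn : k + 1 ≤ n := by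
    have : (k : ℝ) < n := by nlinarith [hI.2]
    exact_mod_cast this
  rw [normConst_mul_levelWeight K J m hk hkn]
  have hS := stirErr_le hk hkn
  obtain ⟨b1, b2⟩ := gridMag_bounds hk hkn
  have hk1 : (1 : ℝ) ≤ k := by exact_mod_cast hk
  have hl1 : (1 : ℝ) ≤ ((n - k : ℕ) : ℝ) := by exact_mod_cast (by omega : 1 ≤ n - k)
  have hlog1 : Real.log (1 - m ^ 2) ≤ 0 :=
    Real.log_nonpos (by nlinarith [hm.1, hm.2]) (by nlinarith [sq_nonneg m])
  have hlog2 : -(2 * Real.log n) ≤ Real.log (1 - gridMag n k ^ 2) := by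
    have h1 : 1 - gridMag n k ^ 2 = (2 * k / n) * (2 * ((n - k : ℕ) : ℝ) / n) := by
      rw [← b1, ← b2]; ring
    have h2 : -(2 * Real.log n) = Real.log (1 / n * (1 / n)) := by
      rw [Real.log_mul (by positivity) (by positivity), Real.log_div one_ne_zero hn0.ne',
        Real.log_one]; ring
    rw [h1, h2]
    refine Real.log_le_log (by positivity) ?_
    gcongr <;> linarith
  calc _ ≤ Real.exp (1 + Real.log n + -(n * η)) := by
        refine Real.exp_le_exp.2 ?_
        have := mul_le_mul_of_nonneg_left hη hn0.le
        linarith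
    _ = _ := by rw [Real.exp_add, Real.exp_add, Real.exp_log hn0]

/-! ### Riemann sums of Gaussians -/

/-- The unnormalized centred Gaussian density `exp (-b t²)`. -/
noncomputable def gaussFun (b t : ℝ) : ℝ := Real.exp (-b * t ^ 2)

/-- The absolute value of the derivative of `gaussFun b`, for `0 ≤ b`. -/
noncomputable def gaussSlope (b t : ℝ) : ℝ := |t| * (2 * b * Real.exp (-b * t ^ 2))

lemma gaussFun_nonneg (b t : ℝ) : 0 ≤ gaussFun b t := (Real.exp_pos _).le

lemma gaussFun_le_one {b : ℝ} (hb : 0 < b) (t : ℝ) : gaussFun b t ≤ 1 :=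
  Real.exp_le_one_iff.2 (by nlinarith [sq_nonneg t])

lemma integrable_gaussFun {b : ℝ} (hb : 0 < b) : Integrable (gaussFun b) :=
  integrable_exp_neg_mul_sq hb

lemma integrable_gaussSlope {b : ℝ} (hb : 0 < b) : Integrable (gaussSlope b) := by
  have h := ((integrable_mul_exp_neg_mul_sq hb).norm).const_mul (2 * b)
  refine h.congr (Filter.Eventually.of_forall fun t => ?_)
  simp only [gaussSlope, norm_mul, Real.norm_eq_abs, abs_of_pos (Real.exp_pos _)]
  ring

lemma gaussSlope_nonneg {b : ℝ} (hb : 0 < b) (t : ℝ) : 0 ≤ gaussSlope b t := by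
  unfold gaussSlope; positivity

/-- On one mesh cell, the left-endpoint rule has error at most `h ∫ |f'|`. -/
lemma gauss_cell {b : ℝ} (hb : 0 < b) (a : ℝ) {h : ℝ} (hh : 0 < h) :
    |h * gaussFun b a - ∫ t in Set.Ico a (a + h), gaussFun b t|
      ≤ h * ∫ t in Set.Ico a (a + h), gaussSlope b t := by
  have hosc : ∀ t ∈ Set.Ico a (a + h),
      ‖gaussFun b a - gaussFun b t‖ ≤ ∫ s in Set.Ico a (a + h), gaussSlope b s := by
    intro t ht
    have hder : ∀ x ∈ Set.uIcc a t,
        HasDerivAt (gaussFun b) (Real.exp (-b * x ^ 2) * (-b * (2 * x))) x := by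
      intro x _
      have h1 : HasDerivAt (fun t : ℝ => -b * t ^ 2) (-b * (2 * x)) x := by
        simpa using (hasDerivAt_pow 2 x).const_mul (-b)
      exact h1.exp
    have hint := intervalIntegral.integral_eq_sub_of_hasDerivAt hder
      (Continuous.intervalIntegrable (by fun_prop) _ _)
    rw [norm_sub_rev, ← hint]
    have hnorm : ∀ x : ℝ, ‖Real.exp (-b * x ^ 2) * (-b * (2 * x))‖ = gaussSlope b x := by
      intro x
      simp only [gaussSlope, norm_mul, Real.norm_eq_abs, abs_of_pos (Real.exp_pos _), abs_neg,
        abs_of_pos hb, abs_two]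
      ring
    refine (intervalIntegral.norm_integral_le_integral_norm ht.1).trans ?_
    rw [intervalIntegral.integral_of_le ht.1, ← integral_Ico_eq_integral_Ioc]
    simp_rw [hnorm]
    refine setIntegral_mono_set (integrable_gaussSlope hb).integrableOn
      (Filter.Eventually.of_forall fun x => gaussSlope_nonneg hb x) ?_
    exact (Set.Ico_subset_Ico_right ht.2.le).eventuallyLE
  have hvol : (volume.real (Set.Ico a (a + h))) = h := by
    rw [Real.volume_real_Ico_of_le (by linarith)]; ring
  have hc : h * gaussFun b a = ∫ _t in Set.Ico a (a + h), gaussFun b a := by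
    rw [setIntegral_const, hvol, smul_eq_mul]
  have hci : IntegrableOn (fun _ : ℝ => gaussFun b a) (Set.Ico a (a + h)) :=
    integrableOn_const (by simp)
  have hgi : IntegrableOn (gaussFun b) (Set.Ico a (a + h)) := (integrable_gaussFun hb).integrableOn
  rw [hc, ← integral_sub hci.integrable hgi.integrable]
  have := norm_setIntegral_le_of_norm_le_const (μ := volume) (by simp) hosc
  rw [hvol, mul_comm] at this
  exact this

lemma cells_disjoint (z : ℝ) {h : ℝ} (hh : 0 < h) (T : Set ℕ) :
    T.PairwiseDisjoint fun k : ℕ => Set.Ico (z + k * h) (z + k * h + h) := by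
  intro i _ j _ hij
  refine Set.disjoint_left.2 fun t hi hj => hij ?_
  have h1 : (i : ℝ) < j + 1 := by
    by_contra hcon
    push Not at hcon
    nlinarith [hi.1, hj.2]
  have h2 : (j : ℝ) < i + 1 := by
    by_contra hcon
    push Not at hcon
    nlinarith [hj.1, hi.2]
  have h1' : i < j + 1 := by exact_mod_cast h1
  have h2' : j < i + 1 := by exact_mod_cast h2
  omega

/-- The left-endpoint rule on any finite family of mesh cells, with an error uniform in the
family. -/
lemma gauss_riemann {b : ℝ} (hb : 0 < b) (z : ℝ) {h : ℝ} (hh : 0 < h) (T : Finset ℕ) :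
    |h * ∑ k ∈ T, gaussFun b (z + k * h)
        - ∫ t in ⋃ k ∈ T, Set.Ico (z + k * h) (z + k * h + h), gaussFun b t|
      ≤ h * ∫ t, gaussSlope b t := by
  have hd : (T : Set ℕ).PairwiseDisjoint fun k : ℕ => Set.Ico (z + k * h) (z + k * h + h) :=
    cells_disjoint z hh _
  rw [integral_biUnion_finset T (fun _ _ => measurableSet_Ico) hd
    (fun _ _ => (integrable_gaussFun hb).integrableOn), Finset.mul_sum, ← Finset.sum_sub_distrib]
  refine (Finset.abs_sum_le_sum_abs _ _).trans ?_
  refine (Finset.sum_le_sum fun (k : ℕ) _ => gauss_cell hb (z + k * h) hh).trans ?_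
  rw [← Finset.mul_sum, ← integral_biUnion_finset T (fun _ _ => measurableSet_Ico) hd
    (fun _ _ => (integrable_gaussSlope hb).integrableOn)]
  refine mul_le_mul_of_nonneg_left ?_ hh.le
  exact setIntegral_le_integral (integrable_gaussSlope hb)
    (Filter.Eventually.of_forall fun x => gaussSlope_nonneg hb x)

lemma gauss_sum_le {b : ℝ} (hb : 0 < b) (z : ℝ) {h : ℝ} (hh : 0 < h) (T : Finset ℕ) :
    h * ∑ k ∈ T, gaussFun b (z + k * h)
      ≤ (∫ t, gaussFun b t) + h * ∫ t, gaussSlope b t := by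
  have h1 := (abs_le.1 (gauss_riemann hb z hh T)).2
  have h2 : ∫ t in ⋃ k ∈ T, Set.Ico (z + k * h) (z + k * h + h), gaussFun b t
      ≤ ∫ t, gaussFun b t := setIntegral_le_integral (integrable_gaussFun hb)
    (Filter.Eventually.of_forall fun x => gaussFun_nonneg b x)
  linarith

/-- Markov-type tail bound: `1 ≤ |t| / R` on the domain of integration. -/
lemma gauss_tail {b : ℝ} (hb : 0 < b) {R : ℝ} (hR : 0 < R) :
    ∫ t in {t : ℝ | R ≤ |t|}, gaussFun b t ≤ 1 / (2 * b * R) * ∫ t, gaussSlope b t := by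
  have hmeas : MeasurableSet {t : ℝ | R ≤ |t|} :=
    (isClosed_le continuous_const continuous_abs).measurableSet
  rw [← integral_const_mul]
  refine (setIntegral_mono_on (integrable_gaussFun hb).integrableOn
    ((integrable_gaussSlope hb).const_mul (1 / (2 * b * R))).integrableOn hmeas ?_).trans
    (setIntegral_le_integral ((integrable_gaussSlope hb).const_mul _)
      (Filter.Eventually.of_forall fun x => mul_nonneg (by positivity) (gaussSlope_nonneg hb x)))
  intro t ht
  have ht' : R ≤ |t| := ht
  have e : 1 / (2 * b * R) * gaussSlope b t = |t| / R * gaussFun b t := by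
    unfold gaussSlope gaussFun; field_simp
  rw [e]
  have : 1 ≤ |t| / R := by rwa [le_div_iff₀ hR, one_mul]
  nlinarith [gaussFun_nonneg b t]

/-- Comparison of two set integrals of the Gaussian through the two set differences. -/
lemma gauss_set_diff {b : ℝ} (hb : 0 < b) {U B V W : Set ℝ} (hU : MeasurableSet U)
    (hB : MeasurableSet B) (hV : U \ B ⊆ V) (hW : B \ U ⊆ W) :
    |(∫ t in U, gaussFun b t) - ∫ t in B, gaussFun b t|
      ≤ (∫ t in V, gaussFun b t) + ∫ t in W, gaussFun b t := by
  have hi : Integrable (gaussFun b) := integrable_gaussFun hb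
  have hnn : ∀ S : Set ℝ, 0 ≤ᵐ[volume.restrict S] gaussFun b := fun S =>
    Filter.Eventually.of_forall fun x => gaussFun_nonneg b x
  have h1 := integral_inter_add_sdiff (f := gaussFun b) (μ := volume) (s := U) (t := B) hB
    hi.integrableOn
  have h2 := integral_inter_add_sdiff (f := gaussFun b) (μ := volume) (s := B) (t := U) hU
    hi.integrableOn
  rw [Set.inter_comm] at h2
  have h3 : ∫ t in U \ B, gaussFun b t ≤ ∫ t in V, gaussFun b t :=
    setIntegral_mono_set hi.integrableOn (hnn _) hV.eventuallyLE
  have h4 : ∫ t in B \ U, gaussFun b t ≤ ∫ t in W, gaussFun b t :=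
    setIntegral_mono_set hi.integrableOn (hnn _) hW.eventuallyLE
  have h5 : 0 ≤ ∫ t in U \ B, gaussFun b t := integral_nonneg_of_ae (hnn _)
  have h6 : 0 ≤ ∫ t in B \ U, gaussFun b t := integral_nonneg_of_ae (hnn _)
  rw [abs_le]
  constructor <;> linarith

open Classical in
/-- Riemann sums of the Gaussian over the grid points lying in a half-line `B` (or the whole
line) and in the window `(-R, R)` approximate the integral over `B`. -/
lemma gauss_grid {b : ℝ} (hb : 0 < b) (z : ℝ) {h R : ℝ} (hh : 0 < h) (hR : h < R) (n : ℕ)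
    (hz : z ≤ -R) (hzn : R ≤ z + n * h) (B : Set ℝ) (hB : MeasurableSet B)
    (hlow : ∀ s ∈ B, ∀ t ≤ s, t ∈ B)
    (x : ℝ) (hup : ∀ s ∈ B, ∀ t, s ≤ t → t < s + h → t ∉ B → t ∈ Set.Icc x (x + h)) :
    |h * ∑ k ∈ (Finset.range (n + 1)).filter
          (fun k : ℕ => z + k * h ∈ B ∧ |z + k * h| < R), gaussFun b (z + k * h)
        - ∫ t in B, gaussFun b t|
      ≤ h * (∫ t, gaussSlope b t) + h + 1 / (2 * b * (R - h)) * ∫ t, gaussSlope b t := by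
  set T := (Finset.range (n + 1)).filter (fun k : ℕ => z + k * h ∈ B ∧ |z + k * h| < R) with hT
  set U := ⋃ k ∈ T, Set.Ico (z + k * h) (z + k * h + h) with hU
  have hUm : MeasurableSet U := Finset.measurableSet_biUnion T fun _ _ => measurableSet_Ico
  have h1 := gauss_riemann hb z hh T
  have h2 : |(∫ t in U, gaussFun b t) - ∫ t in B, gaussFun b t|
      ≤ (∫ t in Set.Icc x (x + h), gaussFun b t)
        + ∫ t in {t : ℝ | R - h ≤ |t|}, gaussFun b t := by
    refine gauss_set_diff hb hUm hB ?_ ?_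
    · rintro t ⟨htU, htB⟩
      simp only [hU, Set.mem_iUnion] at htU
      obtain ⟨k, hk, ht⟩ := htU
      have hk' := (Finset.mem_filter.1 hk).2
      exact hup _ hk'.1 t ht.1 ht.2 htB
    · rintro t ⟨htB, htU⟩
      by_contra hcon
      have hcon' : |t| < R - h := not_le.1 hcon
      obtain ⟨ha, hb'⟩ := abs_lt.1 hcon'
      apply htU
      -- The cell of the grid that contains `t`.
      set k := ⌊(t - z) / h⌋₊ with hk
      have hpos : 0 ≤ (t - z) / h := div_nonneg (by linarith) hh.le
      have k1 : (k : ℝ) * h ≤ t - z := (le_div_iff₀ hh).1 (Nat.floor_le hpos)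
      have k2 : t - z < (k + 1) * h := (div_lt_iff₀ hh).1 (Nat.lt_floor_add_one _)
      have hkn : k < n + 1 := by
        have : (k : ℝ) * h < n * h := by linarith
        have : (k : ℝ) < n := lt_of_mul_lt_mul_right this hh.le
        have : k < n := by exact_mod_cast this
        omega
      simp only [hU, Set.mem_iUnion]
      refine ⟨k, Finset.mem_filter.2 ⟨Finset.mem_range.2 hkn, hlow t htB _ (by linarith), ?_⟩,
        ⟨by linarith, by linarith⟩⟩
      rw [abs_lt]
      constructor <;> linarith
  have h3 : ∫ t in Set.Icc x (x + h), gaussFun b t ≤ h := by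
    have := setIntegral_mono_on (integrable_gaussFun hb).integrableOn
      (integrableOn_const (C := (1 : ℝ)) (by simp)) (measurableSet_Icc (a := x) (b := x + h))
      fun t _ => gaussFun_le_one hb t
    rw [setIntegral_const, Real.volume_real_Icc_of_le (by linarith)] at this
    simpa using this
  have h4 := gauss_tail hb (sub_pos.2 hR)
  have h5 := abs_sub_le (h * ∑ k ∈ T, gaussFun b (z + k * h)) (∫ t in U, gaussFun b t)
    (∫ t in B, gaussFun b t)
  linarith

/-! ### The Berry–Esseen bound -/

lemma grid_eq {n : ℕ} (hn : 1 ≤ n) (k : ℕ) {lam : ℝ} (hlam : 0 < lam) (m : ℝ) :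
    √(n * lam) * (-1 - m) + k * (2 * √lam / √n) = √(n * lam) * (gridMag n k - m) := by
  have hn0 : (0 : ℝ) < n := by exact_mod_cast hn
  have hs0 : 0 < √(n : ℝ) := Real.sqrt_pos.2 hn0
  have hs2 : √(n : ℝ) * √n = n := Real.mul_self_sqrt hn0.le
  rw [Real.sqrt_mul hn0.le, gridMag]
  have h1 : (k : ℝ) * (2 * √lam / √n) = √n * √lam * (2 * k / n) := by
    rw [mul_div_assoc', mul_div_assoc', div_eq_div_iff hs0.ne' hn0.ne']
    linear_combination (-(2 * k * √lam)) * hs2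
  rw [h1]
  field_simp
  ring

open Classical in
/-- The rescaled sum of the normalized level weights over `A` and over the rescaled
magnetizations in a half-line (or the whole line) is a Gaussian integral up to `O(1/√n)`. -/
lemma weighted_sum (K J m : ℝ) (hm : m ∈ Set.Ioo (-1 : ℝ) 1)
    (hmin : ∀ y ∈ Set.Icc (-1 : ℝ) 1, phiKJ K J m ≤ phiKJ K J y)
    (hlam : 0 < iteratedDeriv 2 (phiKJ K J) m) (A : Set ℝ) (hA : A ∈ nhds m)
    (hAsub : A ⊆ Set.Ioo (-1 : ℝ) 1)
    (huniq : ∀ y ∈ closure A, phiKJ K J y = phiKJ K J m → y = m) :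
    ∃ C > 0, ∃ N : ℕ, ∀ n : ℕ, 1 ≤ n → N ≤ n → ∀ B : Set ℝ, (B = Set.univ ∨ ∃ x, B = Set.Iic x) →
      |2 * √(iteratedDeriv 2 (phiKJ K J) m) / √n *
          ∑ k ∈ (Finset.range (n + 1)).filter (fun k => gridMag n k ∈
            {t | √(n * iteratedDeriv 2 (phiKJ K J) m) * (t - m) ∈ B} ∩ A),
            normConst n K J m * levelWeight n K J k
        - ∫ t in B, gaussFun (1 / 2) t| ≤ C / √n := by
  obtain ⟨Cl, hCl, δ, hδ, hball, hloc⟩ := local_estimate K J m hm hmin hlam A hA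
  obtain ⟨η, hη, hgap⟩ := phiKJ_gap K J m A hAsub hmin huniq hδ
  set lam := iteratedDeriv 2 (phiKJ K J) m with hlamdef
  have hhalf : (0 : ℝ) < 1 / 2 := by norm_num
  have heighth : (0 : ℝ) < 1 / 8 := by norm_num
  set G2 := ∫ t, gaussSlope (1 / 2) t with hG2
  set G8 := ∫ t, gaussSlope (1 / 8) t with hG8
  set I8 := ∫ t, gaussFun (1 / 8) t with hI8
  have hG2p : 0 ≤ G2 := integral_nonneg fun t => gaussSlope_nonneg hhalf t
  have hG8p : 0 ≤ G8 := integral_nonneg fun t => gaussSlope_nonneg heighth t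
  have hI8p : 0 ≤ I8 := integral_nonneg fun t => gaussFun_nonneg _ t
  have hsl : 0 < √lam := Real.sqrt_pos.2 hlam
  refine ⟨Cl * (I8 + 2 * √lam * G8) + 2 * √lam * (4 * Real.exp 1 / η ^ 2)
    + (2 * √lam * G2 + 2 * √lam + 2 / (√lam * δ) * G2), by positivity, ⌈4 / δ⌉₊, ?_⟩
  intro n hn hnN B hBc
  have hn0 : (0 : ℝ) < n := by exact_mod_cast hn
  have hn1 : (1 : ℝ) ≤ n := by exact_mod_cast hn
  have hs0 : 0 < √(n : ℝ) := Real.sqrt_pos.2 hn0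
  have hs1 : 1 ≤ √(n : ℝ) := Real.one_le_sqrt.2 hn1
  have hs2 : √(n : ℝ) * √n = n := Real.mul_self_sqrt hn0.le
  have hnδ : 4 ≤ n * δ := by
    have : 4 / δ ≤ n := (Nat.le_ceil _).trans (by exact_mod_cast hnN)
    rwa [div_le_iff₀ hδ] at this
  set h := 2 * √lam / √n with hh
  have hh0 : 0 < h := by positivity
  have hh1 : h ≤ 2 * √lam := div_le_self (by positivity) hs1
  set R := √(n * lam) * δ with hR
  have hRe : R = √n * √lam * δ := by rw [hR, Real.sqrt_mul hn0.le]
  have hnl : 0 < √(n * lam) := Real.sqrt_pos.2 (by positivity)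
  have hR2 : h ≤ R / 2 := by
    rw [hRe, hh, div_le_iff₀ hs0]
    have : √n * √lam * δ / 2 * √n = √lam * (n * δ) / 2 := by
      linear_combination √lam * δ / 2 * hs2
    rw [this]
    nlinarith
  have hRpos : 0 < R := by positivity
  have hδ1 : δ ≤ 1 + m := by
    by_contra hcon
    have := (hball (-1) (by rw [abs_lt]; constructor <;> linarith [hm.1])).2.1
    exact lt_irrefl _ this
  have hδ2 : δ ≤ 1 - m := by
    by_contra hcon
    have := (hball 1 (by rw [abs_lt]; constructor <;> linarith [hm.2])).2.2
    exact lt_irrefl _ this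
  set z := √(n * lam) * (-1 - m) with hz
  have hgrid : ∀ k : ℕ, z + k * h = √(n * lam) * (gridMag n k - m) := fun k =>
    grid_eq hn k hlam m
  have hzR : z ≤ -R := by
    rw [hz, hR]; nlinarith
  have hznR : R ≤ z + n * h := by
    rw [hgrid, hR]
    have : gridMag n n = 1 := by rw [gridMag]; field_simp; ring
    rw [this]
    exact mul_le_mul_of_nonneg_left hδ2 hnl.le
  -- The three properties of `B` needed to compare the Riemann sum with the integral.
  obtain ⟨hBm, hlow, x, hup⟩ : MeasurableSet B ∧ (∀ s ∈ B, ∀ t ≤ s, t ∈ B) ∧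
      ∃ x : ℝ, ∀ s ∈ B, ∀ t, s ≤ t → t < s + h → t ∉ B → t ∈ Set.Icc x (x + h) := by
    rcases hBc with rfl | ⟨x, rfl⟩
    · exact ⟨MeasurableSet.univ, fun _ _ _ _ => trivial, 0, fun _ _ t _ _ ht => (ht trivial).elim⟩
    · refine ⟨measurableSet_Iic, fun s hs t ht => le_trans ht hs, x, fun s hs t h1 h2 h3 => ?_⟩
      have h4 : x < t := not_le.1 h3
      have h5 : s ≤ x := hs
      exact ⟨h4.le, by linarith⟩
  have hgg := gauss_grid hhalf z hh0 (by linarith : h < R) n hzR hznR B hBm hlow x hup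
  set T := (Finset.range (n + 1)).filter
    (fun k : ℕ => z + k * h ∈ B ∧ |z + k * h| < R) with hT
  set S := (Finset.range (n + 1)).filter (fun k => gridMag n k ∈
            {t | √(n * lam) * (t - m) ∈ B} ∩ A) with hS
  have hnear : ∀ k : ℕ, |z + k * h| < R ↔ |gridMag n k - m| < δ := by
    intro k
    rw [hgrid, abs_mul, abs_of_pos hnl, hR]
    exact mul_lt_mul_iff_right₀ hnl
  have hTS : T ⊆ S := by
    intro k hk
    obtain ⟨hk1, hk2, hk3⟩ := Finset.mem_filter.1 hk
    refine Finset.mem_filter.2 ⟨hk1, ?_, (hball _ ((hnear k).1 hk3)).1⟩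
    rw [hgrid] at hk2
    exact hk2
  have hsplit := Finset.sum_sdiff hTS (f := fun k => normConst n K J m * levelWeight n K J k)
  have hanonneg : ∀ k, 0 ≤ normConst n K J m * levelWeight n K J k := by
    intro k; unfold normConst levelWeight; positivity
  have hfar : |h * ∑ k ∈ S \ T, normConst n K J m * levelWeight n K J k|
      ≤ 2 * √lam * (4 * Real.exp 1 / η ^ 2) / √n := by
    rw [abs_of_nonneg (mul_nonneg hh0.le (Finset.sum_nonneg fun k _ => hanonneg k))]
    have h1 : ∑ k ∈ S \ T, normConst n K J m * levelWeight n K J k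
        ≤ (S \ T).card • (Real.exp 1 * n * Real.exp (-(n * η))) := by
      refine Finset.sum_le_card_nsmul _ _ _ fun k hk => ?_
      obtain ⟨hkS, hkT⟩ := Finset.mem_sdiff.1 hk
      obtain ⟨hk1, hk2, hk3⟩ := Finset.mem_filter.1 hkS
      refine far_estimate K J m hm hn (hAsub hk3) (hgap _ hk3 ?_)
      by_contra hcon
      refine hkT (Finset.mem_filter.2 ⟨hk1, ?_, (hnear k).2 (not_le.1 hcon)⟩)
      rw [hgrid]
      exact hk2
    have h2 : ((S \ T).card : ℝ) ≤ 2 * n := by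
      have : (S \ T).card ≤ (Finset.range (n + 1)).card :=
        Finset.card_le_card (Finset.sdiff_subset.trans (Finset.filter_subset _ _))
      rw [Finset.card_range] at this
      have : ((S \ T).card : ℝ) ≤ n + 1 := by exact_mod_cast this
      linarith
    have h3 : (n : ℝ) ^ 2 * Real.exp (-(n * η)) ≤ 2 / η ^ 2 := by
      have := Real.quadratic_le_exp_of_nonneg (by positivity : 0 ≤ n * η)
      rw [Real.exp_neg, ← div_eq_mul_inv, div_le_div_iff₀ (Real.exp_pos _) (by positivity)]
      have : 0 ≤ n * η := by positivity
      nlinarith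
    rw [nsmul_eq_mul] at h1
    have h4 : ((S \ T).card : ℝ) * (Real.exp 1 * n * Real.exp (-(n * η)))
        ≤ 4 * Real.exp 1 / η ^ 2 := by
      calc ((S \ T).card : ℝ) * (Real.exp 1 * n * Real.exp (-(n * η)))
          ≤ 2 * n * (Real.exp 1 * n * Real.exp (-(n * η))) :=
            mul_le_mul_of_nonneg_right h2 (by positivity)
        _ = 2 * Real.exp 1 * (n ^ 2 * Real.exp (-(n * η))) := by ring
        _ ≤ 2 * Real.exp 1 * (2 / η ^ 2) := mul_le_mul_of_nonneg_left h3 (by positivity)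
        _ = _ := by ring
    calc h * ∑ k ∈ S \ T, normConst n K J m * levelWeight n K J k
        ≤ h * (4 * Real.exp 1 / η ^ 2) := mul_le_mul_of_nonneg_left (h1.trans h4) hh0.le
      _ = _ := by rw [hh]; ring
  have hnearsum : |h * ∑ k ∈ T, normConst n K J m * levelWeight n K J k
      - h * ∑ k ∈ T, gaussFun (1 / 2) (z + k * h)| ≤ Cl * (I8 + 2 * √lam * G8) / √n := by
    rw [← mul_sub, ← Finset.sum_sub_distrib, abs_mul, abs_of_pos hh0]
    have h1 : |∑ k ∈ T, (normConst n K J m * levelWeight n K J k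
        - gaussFun (1 / 2) (z + k * h))| ≤ Cl / √n * ∑ k ∈ T, gaussFun (1 / 8) (z + k * h) := by
      refine (Finset.abs_sum_le_sum_abs _ _).trans ?_
      rw [Finset.mul_sum]
      refine Finset.sum_le_sum fun k hk => ?_
      have hk3 := (Finset.mem_filter.1 hk).2.2
      have := hloc n k hn ((hnear k).1 hk3)
      rw [hgrid]
      exact this
    have h2 := gauss_sum_le heighth z hh0 T
    calc h * |∑ k ∈ T, (normConst n K J m * levelWeight n K J k
        - gaussFun (1 / 2) (z + k * h))|
        ≤ h * (Cl / √n * ∑ k ∈ T, gaussFun (1 / 8) (z + k * h)) :=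
          mul_le_mul_of_nonneg_left h1 hh0.le
      _ = Cl / √n * (h * ∑ k ∈ T, gaussFun (1 / 8) (z + k * h)) := by ring
      _ ≤ Cl / √n * (I8 + 2 * √lam * G8) := by
          refine mul_le_mul_of_nonneg_left (h2.trans ?_) (by positivity)
          have := mul_le_mul_of_nonneg_right hh1 hG8p
          linarith
      _ = _ := by ring
  have hgg' : h * G2 + h + 1 / (2 * (1 / 2) * (R - h)) * G2
      ≤ (2 * √lam * G2 + 2 * √lam + 2 / (√lam * δ) * G2) / √n := by
    have h1 : 1 / (2 * (1 / 2) * (R - h)) ≤ 1 / (R / 2) :=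
      one_div_le_one_div_of_le (by positivity) (by linarith)
    have h2 : 1 / (R / 2) = 2 / (√lam * δ) / √n := by rw [hRe]; field_simp
    rw [h2] at h1
    have h3 := mul_le_mul_of_nonneg_right h1 hG2p
    have h4 : (2 * √lam * G2 + 2 * √lam + 2 / (√lam * δ) * G2) / √n
        = h * G2 + h + 2 / (√lam * δ) / √n * G2 := by rw [hh]; ring
    rw [h4]
    linarith
  rw [← hsplit, mul_add]
  have hfin := abs_add_three (h * ∑ k ∈ S \ T, normConst n K J m * levelWeight n K J k)
    (h * ∑ k ∈ T, normConst n K J m * levelWeight n K J k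
      - h * ∑ k ∈ T, gaussFun (1 / 2) (z + k * h))
    (h * ∑ k ∈ T, gaussFun (1 / 2) (z + k * h) - ∫ t in B, gaussFun (1 / 2) t)
  have e1 : h * ∑ k ∈ S \ T, normConst n K J m * levelWeight n K J k +
      (h * ∑ k ∈ T, normConst n K J m * levelWeight n K J k
      - h * ∑ k ∈ T, gaussFun (1 / 2) (z + k * h)) +
      (h * ∑ k ∈ T, gaussFun (1 / 2) (z + k * h) - ∫ t in B, gaussFun (1 / 2) t)
      = h * ∑ k ∈ S \ T, normConst n K J m * levelWeight n K J k +
        h * ∑ k ∈ T, normConst n K J m * levelWeight n K J k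
        - ∫ t in B, gaussFun (1 / 2) t := by ring
  rw [e1] at hfin
  refine hfin.trans ?_
  rw [add_div, add_div]
  linarith

lemma stdNormalCDF_eq (x : ℝ) :
    stdNormalCDF x = (√(2 * π))⁻¹ * ∫ t in Set.Iic x, gaussFun (1 / 2) t := by
  rw [stdNormalCDF, gaussianReal_apply_eq_integral _ one_ne_zero, ENNReal.toReal_ofReal
    (integral_nonneg fun t => gaussianPDFReal_nonneg _ _ _), ← integral_const_mul]
  refine integral_congr_ae (Filter.Eventually.of_forall fun t => ?_)
  simp only [gaussianPDFReal, gaussFun]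
  norm_num
  left
  ring

lemma stdNormalCDF_mem (x : ℝ) : 0 ≤ stdNormalCDF x ∧ stdNormalCDF x ≤ 1 := by
  refine ⟨ENNReal.toReal_nonneg, ?_⟩
  exact ENNReal.toReal_le_of_le_ofReal zero_le_one (by simpa using prob_le_one)

/-- Quotients of quantities that are close to `I p` and `I` are close to `p`. -/
lemma ratio_close {I N D p ε : ℝ} (hI : 2 ≤ I) (hp0 : 0 ≤ p) (hp1 : p ≤ 1) (hε : ε ≤ 1)
    (hN : |N - I * p| ≤ ε) (hD : |D - I| ≤ ε) : |N / D - p| ≤ 2 * ε := by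
  have hε0 : 0 ≤ ε := (abs_nonneg _).trans hD
  obtain ⟨d1, d2⟩ := abs_le.1 hD
  obtain ⟨n1, n2⟩ := abs_le.1 hN
  have hD1 : 1 ≤ D := by linarith
  have e : N / D - p = (N - p * D) / D := by
    have : D ≠ 0 := by linarith
    field_simp
  rw [e, abs_div, abs_of_pos (by linarith : 0 < D), div_le_iff₀ (by linarith)]
  have h1 : |N - p * D| ≤ 2 * ε := by
    rw [abs_le]
    constructor <;> nlinarith
  nlinarith

/-- The Berry–Esseen bound for a single phase. -/
lemma single_phase (K J m : ℝ) (hm : m ∈ Set.Ioo (-1 : ℝ) 1)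
    (hmin : ∀ y ∈ Set.Icc (-1 : ℝ) 1, phiKJ K J m ≤ phiKJ K J y)
    (hlam : 0 < iteratedDeriv 2 (phiKJ K J) m) (A : Set ℝ) (hA : A ∈ nhds m)
    (hAsub : A ⊆ Set.Ioo (-1 : ℝ) 1)
    (huniq : ∀ y ∈ closure A, phiKJ K J y = phiKJ K J m → y = m) :
    ∃ c : ℝ, 0 < c ∧ ∀ n : ℕ, 1 ≤ n → ∀ x : ℝ,
      |cubicProb n K J
            ({y | (totalMag n y - n * m) /
                Real.sqrt (n / iteratedDeriv 2 (phiKJ K J) m) ≤ x}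
              ∩ {y | magPP n y ∈ A}) /
          cubicProb n K J {y | magPP n y ∈ A}
        - stdNormalCDF x| ≤ c / Real.sqrt n := by
  classical
  obtain ⟨C, hC, N, hw⟩ := weighted_sum K J m hm hmin hlam A hA hAsub huniq
  set lam := iteratedDeriv 2 (phiKJ K J) m with hlamdef
  -- For `n < M` the constant `√M` makes the bound trivial.
  set M := max N ⌈C ^ 2⌉₊ with hM
  refine ⟨2 * C + √M, by positivity, fun n hn x => ?_⟩
  have hn0 : (0 : ℝ) < n := by exact_mod_cast hn
  have hs0 : 0 < √(n : ℝ) := Real.sqrt_pos.2 hn0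
  have hset : ({y : Fin n → Bool | (totalMag n y - n * m) / √(n / lam) ≤ x}
      ∩ {y | magPP n y ∈ A})
      = {y | magPP n y ∈ {t | √(n * lam) * (t - m) ∈ Set.Iic x} ∩ A} := by
    ext y
    have e : (totalMag n y - n * m) / √(n / lam) = √(n * lam) * (magPP n y - m) := by
      have h1 : √(n * lam) * √(n / lam) = n := by
        rw [← Real.sqrt_mul (by positivity)]
        have : (n : ℝ) * lam * (n / lam) = n * n := by field_simp
        rw [this, Real.sqrt_mul_self hn0.le]
      have h2 : 0 < √(n / lam) := Real.sqrt_pos.2 (by positivity)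
      rw [div_eq_iff h2.ne', mul_assoc, mul_comm (magPP n y - m), ← mul_assoc, h1, magPP]
      field_simp
    simp only [Set.mem_inter_iff, Set.mem_ofPred_eq, Set.mem_Iic, e]
  have hset2 : {y : Fin n → Bool | magPP n y ∈ A}
      = {y | magPP n y ∈ {t | √(n * lam) * (t - m) ∈ (Set.univ : Set ℝ)} ∩ A} := by
    ext y; simp
  obtain ⟨p0, p1⟩ := stdNormalCDF_mem x
  by_cases hnM : M ≤ n
  · have h1 := hw n hn ((le_max_left _ _).trans hnM) (Set.Iic x) (Or.inr ⟨x, rfl⟩)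
    have h2 := hw n hn ((le_max_left _ _).trans hnM) Set.univ (Or.inl rfl)
    have hint : ∫ t in (Set.univ : Set ℝ), gaussFun (1 / 2) t = √(2 * π) := by
      rw [setIntegral_univ]
      have := integral_gaussian (1 / 2)
      simp only [gaussFun]
      rw [this]
      congr 1
      ring
    have hpi : 0 < √(2 * π) := by positivity
    have hIic : ∫ t in Set.Iic x, gaussFun (1 / 2) t = √(2 * π) * stdNormalCDF x := by
      rw [stdNormalCDF_eq]
      field_simp
    rw [hint] at h2
    rw [hIic] at h1
    have hI2 : 2 ≤ √(2 * π) := by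
      rw [Real.le_sqrt (by norm_num) (by positivity)]
      nlinarith [Real.pi_gt_three]
    have hε : C / √n ≤ 1 := by
      rw [div_le_one hs0]
      refine Real.le_sqrt_of_sq_le ((Nat.le_ceil _).trans ?_)
      exact_mod_cast (le_max_right _ _).trans hnM
    have hfin := ratio_close hI2 p0 p1 hε h1 h2
    have hc : 2 * √lam / √n * normConst n K J m ≠ 0 := by
      have : 0 < √lam := Real.sqrt_pos.2 hlam
      unfold normConst
      positivity
    rw [← Finset.mul_sum, ← Finset.mul_sum, ← mul_assoc, ← mul_assoc,
      mul_div_mul_left _ _ hc, ← cubicProb_ratio, ← hset, ← hset2] at hfin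
    refine hfin.trans ?_
    rw [← mul_div_assoc]
    gcongr
    have := Real.sqrt_nonneg (M : ℝ)
    linarith
  · push Not at hnM
    rw [hset, hset2, cubicProb_ratio]
    have hq : ∀ F : ℕ → ℝ, (∀ k, 0 ≤ F k) → ∀ S T : Finset ℕ, S ⊆ T →
        0 ≤ (∑ k ∈ S, F k) / ∑ k ∈ T, F k ∧ (∑ k ∈ S, F k) / ∑ k ∈ T, F k ≤ 1 := by
      intro F hF S T hST
      have h1 : 0 ≤ ∑ k ∈ S, F k := Finset.sum_nonneg fun k _ => hF k
      have h2 := Finset.sum_le_sum_of_subset_of_nonneg hST fun k _ _ => hF k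
      exact ⟨div_nonneg h1 (h1.trans h2), div_le_one_of_le₀ h2 (h1.trans h2)⟩
    obtain ⟨q0, q1⟩ := hq (levelWeight n K J) (fun k => by unfold levelWeight; positivity)
      ((Finset.range (n + 1)).filter
        fun k => gridMag n k ∈ {t | √(n * lam) * (t - m) ∈ Set.Iic x} ∩ A)
      ((Finset.range (n + 1)).filter
        fun k => gridMag n k ∈ {t | √(n * lam) * (t - m) ∈ (Set.univ : Set ℝ)} ∩ A)
      (Finset.monotone_filter_right _ fun k _ hk => ⟨trivial, hk.2⟩)
    have hone : 1 ≤ (2 * C + √M) / √n := by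
      rw [le_div_iff₀ hs0, one_mul]
      have : √(n : ℝ) ≤ √M := Real.sqrt_le_sqrt (by exact_mod_cast hnM.le)
      linarith
    refine le_trans ?_ hone
    rw [abs_le]
    constructor <;> linarith

/-- Local (conditional) Berry–Esseen bounds on the coexistence curve: when `φ_{K,J}`
has exactly two minimizers `m 0 ≠ m 1` in `(−1,1)`, both nondegenerate, and `A i` is
an open neighborhood of `m i` in `(−1,1)` whose closure misses the other phase, then
conditionally on `m_n ∈ A i`, the rescaled magnetization around `m i` satisfies a
Berry–Esseen bound of order `1/√n`. -/
theorem stmt_10 (K J : ℝ) (hK : 0 < K) (m : Fin 2 → ℝ)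
    (hne : m 0 ≠ m 1)
    (hmem : ∀ i, m i ∈ Set.Ioo (-1 : ℝ) 1)
    (hmin : ∀ i, ∀ y ∈ Set.Icc (-1 : ℝ) 1, phiKJ K J (m i) ≤ phiKJ K J y)
    (huniq : ∀ y ∈ Set.Icc (-1 : ℝ) 1,
      phiKJ K J y = phiKJ K J (m 0) → (y = m 0 ∨ y = m 1))
    (hconv : ∀ i, 0 < iteratedDeriv 2 (phiKJ K J) (m i))
    (A : Fin 2 → Set ℝ)
    (hAopen : ∀ i, IsOpen (A i)) (hAmem : ∀ i, m i ∈ A i)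
    (hAsub : ∀ i, A i ⊆ Set.Ioo (-1 : ℝ) 1)
    (hAcl : ∀ i, m (1 - i) ∉ closure (A i)) :
    ∃ c : ℝ, 0 < c ∧ ∀ i : Fin 2, ∀ n : ℕ, 1 ≤ n → ∀ x : ℝ,
      |cubicProb n K J
            ({y | (totalMag n y - n * m i) /
                Real.sqrt (n / iteratedDeriv 2 (phiKJ K J) (m i)) ≤ x}
              ∩ {y | magPP n y ∈ A i}) /
          cubicProb n K J {y | magPP n y ∈ A i}
        - stdNormalCDF x| ≤ c / Real.sqrt n := by
  have hval : ∀ i j, phiKJ K J (m i) = phiKJ K J (m j) := fun i j =>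
    le_antisymm (hmin i _ ⟨(hmem j).1.le, (hmem j).2.le⟩)
      (hmin j _ ⟨(hmem i).1.le, (hmem i).2.le⟩)
  have hphase := fun i : Fin 2 => single_phase K J (m i) (hmem i) (hmin i) (hconv i) (A i)
    ((hAopen i).mem_nhds (hAmem i)) (hAsub i) (by
      intro y hy hyv
      have hyI : y ∈ Set.Icc (-1 : ℝ) 1 :=
        closure_minimal ((hAsub i).trans Set.Ioo_subset_Icc_self) isClosed_Icc hy
      -- The other minimizer is excluded because it is not in the closure of `A i`.
      have hother : y ≠ m (1 - i) := fun h => hAcl i (h ▸ hy)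
      have h01 := huniq y hyI (hyv.trans (hval i 0))
      fin_cases i
      · exact h01.resolve_right hother
      · exact h01.resolve_left hother)
  choose c hc hbound using hphase
  refine ⟨c 0 + c 1, add_pos (hc 0) (hc 1), fun i n hn x => (hbound i n hn x).trans ?_⟩
  gcongr
  have h0 := hc 0
  have h1 := hc 1
  fin_cases i
  · simp only [Fin.zero_eta]; linarith
  · simp only [Fin.mk_one]; linarith
end

section
/- Let K > 0 and J ∈ ℝ, and assume φ_{K,J} attains its minimum over [−1,1] at a unique point m* ∈ (−1,1) with φ_{K,J}''(m*) > 0. Set λ_n = (1 − (m*)²)·φ_{K,J}''(m*)/n; note 0 < λ_n < 1 for n large. Then there exists a constant C = C(K,J) > 0 such that for every n ≥ 1 there is an exchangeable pair (W_n, W_n') of real random variables on a common probability space with W_n distributed as (S_n − n·m*)/σ_n under P_{n,K,J}, satisfying: |W_n − W_n'| ≤ 2/σ_n almost surely; E(W_n − W_n' | W_n) = λ_n·W_n + R_n almost surely for a σ(W_n)-measurable random variable R_n with E|R_n| ≤ C·n^{−3/2}; and E| 1 − (1/(2λ_n))·E((W_n − W_n')² | W_n) | ≤ C·n^{−1/2}.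 -/
/-!
The pair comes from one step of Glauber dynamics in equilibrium: draw `x` from the Gibbs measure,
pick a site uniformly, resample its spin from its conditional law given the other spins, and let
`W`, `W'` be the normalized magnetizations before and after the step. Detailed balance
(`stepProb_rev`) is exchangeability, and `|S - S'| ≤ 2` is clear.

Given the configuration, the law of `S - S'` depends only on the magnetization `m`, so both
conditional expectations given `W` are explicit: `E(S - S' | W) = drift n m` and
`E((S - S')² | W) = 4 flipProb n m`. Up to `O(1/n)` these are `1 + m - 2 s(2h'(m))` and
`4 ((1 + m)/2 - m s(2h'(m)))`, where `s` is the sigmoid and `h` the energy density. The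
equation `φ'(m*) = 0` says `s(2h'(m*)) = (1 + m*)/2`; hence the drift vanishes to leading order at
`m*`, with slope `(1 - m*²) φ''(m*)`, and the flip probability there is `(1 - m*²)/2` to leading
order (`abs_drift_sub_le`, `abs_flipProb_sub_le`). Both error bounds then follow from
`E(m - m*)² = O(1/n)`.

This second-moment bound (`second_moment_le`) uses the pair itself. Exchangeability gives
`E[drift(m) (m - m*)] = E(S - S')² / (2n) ≤ 2/n`, and near `m*` the left integrand is at least
`c (m - m*)²` up to `O(1/n)`. The event `|m - m*| ≥ δ` has probability `O(1/n)` (`prob_far_le`): the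
number of configurations of magnetization `m` is at most `exp (-n I(m))`, while the Gibbs
variational principle with the product measure of mean `m*` gives `Z ≥ c exp (-n φ(m*))`.
-/

open MeasureTheory ProbabilityTheory Real Filter

/-! ### Taylor bounds for the sigmoid -/

lemma abs_sigmoid_sub_le (u v : ℝ) : |sigmoid u - sigmoid v| ≤ |u - v| := by
  have h := (convex_univ (𝕜 := ℝ) (E := ℝ)).norm_image_sub_le_of_norm_hasDerivWithin_le
    (f := sigmoid) (f' := fun x => sigmoid x * (1 - sigmoid x)) (C := 1) (x := v) (y := u)
    (fun x _ => (hasDerivAt_sigmoid x).hasDerivWithinAt)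
    (fun x _ => by
      have h0 := sigmoid_pos x
      have h1 := sigmoid_lt_one x
      rw [Real.norm_eq_abs, abs_le]
      constructor <;> nlinarith) (Set.mem_univ _) (Set.mem_univ _)
  simpa [Real.norm_eq_abs] using h

/-- First-order Taylor expansion of the sigmoid with a global quadratic remainder. -/
lemma abs_sigmoid_taylor_le (u v : ℝ) :
    |sigmoid u - sigmoid v - sigmoid v * (1 - sigmoid v) * (u - v)| ≤ (u - v) ^ 2 := by
  have h := (convex_uIcc v u).norm_image_sub_le_of_norm_hasDerivWithin_le
    (f := fun x => sigmoid x - sigmoid v * (1 - sigmoid v) * x)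
    (f' := fun x => sigmoid x * (1 - sigmoid x) - sigmoid v * (1 - sigmoid v))
    (C := |u - v|) (x := v) (y := u)
    (fun x _ => by
      have := (hasDerivAt_sigmoid x).sub ((hasDerivAt_id x).const_mul
        (sigmoid v * (1 - sigmoid v)))
      have h2 := this.hasDerivWithinAt (s := Set.uIcc v u)
      rw [mul_one] at h2
      exact h2)
    (fun x hx => by
      have h0 := sigmoid_pos x
      have h1 := sigmoid_lt_one x
      have h0' := sigmoid_pos v
      have h1' := sigmoid_lt_one v
      have e : sigmoid x * (1 - sigmoid x) - sigmoid v * (1 - sigmoid v)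
        = (sigmoid x - sigmoid v) * (1 - sigmoid x - sigmoid v) := by ring
      rw [Real.norm_eq_abs, e, abs_mul]
      have hb : |1 - sigmoid x - sigmoid v| ≤ 1 := by
        rw [abs_le]; constructor <;> linarith
      calc _ ≤ |sigmoid x - sigmoid v| * 1 := by gcongr
        _ ≤ |x - v| := by simpa using abs_sigmoid_sub_le x v
        _ ≤ |u - v| := Set.abs_sub_left_of_mem_uIcc hx)
    Set.left_mem_uIcc Set.right_mem_uIcc
  rw [Real.norm_eq_abs, Real.norm_eq_abs, ← sq, sq_abs] at h
  convert h using 2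
  ring

/-! ### Transition probabilities, drift and flip probability -/

/-- The energy density `h(m) = (K/3) m³ + (J/2) m²`, so that the Gibbs weight is
`exp (n h(m_n(x)))`. -/
noncomputable def energy (K J m : ℝ) : ℝ := K / 3 * m ^ 3 + J / 2 * m ^ 2

/-- Probability that a minus spin of a configuration with magnetization `m` becomes a plus
spin when it is resampled. -/
noncomputable def upRate (K J : ℝ) (n : ℕ) (m : ℝ) : ℝ :=
  sigmoid (n * energy K J (m + 2 / n) - n * energy K J m)

/-- Probability that a plus spin of a configuration with magnetization `m` becomes a minus
spin when it is resampled. -/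
noncomputable def downRate (K J : ℝ) (n : ℕ) (m : ℝ) : ℝ :=
  sigmoid (n * energy K J (m - 2 / n) - n * energy K J m)

/-- The conditional drift `E(S_n − S_n' | m_n = m)` of the Glauber step. -/
noncomputable def drift (K J : ℝ) (n : ℕ) (m : ℝ) : ℝ :=
  (1 + m) * downRate K J n m - (1 - m) * upRate K J n m

/-- The conditional probability, given `m_n = m`, that the Glauber step changes the
configuration. -/
noncomputable def flipProb (K J : ℝ) (n : ℕ) (m : ℝ) : ℝ :=
  (1 + m) / 2 * downRate K J n m + (1 - m) / 2 * upRate K J n m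

/-- Constant in the `O(1/n)` errors of the transition probabilities. -/
noncomputable def rateConst (K J : ℝ) : ℝ := 4 * K + 2 * |J| + 8 * K / 3

/-- Constant in the quadratic error of the linearized drift. -/
noncomputable def driftConst (K J : ℝ) : ℝ := 2 * (4 * K + 2 * |J|) ^ 2 + K

lemma rateConst_pos {K : ℝ} (J : ℝ) (hK : 0 < K) : 0 < rateConst K J := by
  unfold rateConst; positivity

lemma driftConst_pos {K : ℝ} (J : ℝ) (hK : 0 < K) : 0 < driftConst K J := by
  unfold driftConst; positivity

lemma abs_poly_le {K : ℝ} (J : ℝ) (hK : 0 < K) {m e : ℝ} (hm : |m| ≤ 1) (he : |e| ≤ 1) :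
    |4 * K * m + 2 * J + 8 * K / 3 * e| ≤ rateConst K J := by
  unfold rateConst
  calc _ ≤ |4 * K * m| + |2 * J| + |8 * K / 3 * e| := abs_add_three _ _ _
    _ = 4 * K * |m| + 2 * |J| + 8 * K / 3 * |e| := by
      simp only [abs_mul, abs_div, abs_of_pos hK]; norm_num
    _ ≤ 4 * K * 1 + 2 * |J| + 8 * K / 3 * 1 := by gcongr
    _ = _ := by ring

lemma abs_upRate_sub_le {K : ℝ} (J : ℝ) (hK : 0 < K) {n : ℕ} (hn : 1 ≤ n) {m : ℝ}
    (hm : |m| ≤ 1) :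
    |upRate K J n m - sigmoid (2 * K * m ^ 2 + 2 * J * m)| ≤ rateConst K J / n := by
  have hn0 : (0 : ℝ) < n := by exact_mod_cast hn
  have hn1 : (1 : ℝ) ≤ n := by exact_mod_cast hn
  refine (abs_sigmoid_sub_le _ _).trans ?_
  have e : n * energy K J (m + 2 / n) - n * energy K J m - (2 * K * m ^ 2 + 2 * J * m)
      = (4 * K * m + 2 * J + 8 * K / 3 * (1 / n)) / n := by
    unfold energy; field_simp; ring
  rw [e, abs_div, abs_of_pos hn0]
  gcongr
  refine abs_poly_le J hK hm ?_
  rw [abs_of_pos (by positivity), div_le_one hn0]; exact hn1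

lemma abs_downRate_sub_le {K : ℝ} (J : ℝ) (hK : 0 < K) {n : ℕ} (hn : 1 ≤ n) {m : ℝ}
    (hm : |m| ≤ 1) :
    |downRate K J n m - (1 - sigmoid (2 * K * m ^ 2 + 2 * J * m))| ≤ rateConst K J / n := by
  have hn0 : (0 : ℝ) < n := by exact_mod_cast hn
  have hn1 : (1 : ℝ) ≤ n := by exact_mod_cast hn
  rw [← sigmoid_neg]
  refine (abs_sigmoid_sub_le _ _).trans ?_
  have e : n * energy K J (m - 2 / n) - n * energy K J m - -(2 * K * m ^ 2 + 2 * J * m)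
      = (4 * K * m + 2 * J + 8 * K / 3 * (-(1 / n))) / n := by
    unfold energy; field_simp; ring
  rw [e, abs_div, abs_of_pos hn0]
  gcongr
  refine abs_poly_le J hK hm ?_
  rw [abs_neg, abs_of_pos (by positivity), div_le_one hn0]; exact hn1

/-- The drift is linear up to `O(1/n)` and a quadratic error; the linear coefficient is
`(1 - m*²) φ''(m*)` written out. The hypothesis `hs` is the mean-field equation
`φ'(m*) = 0`. -/
lemma abs_drift_sub_le {K : ℝ} (J : ℝ) (hK : 0 < K) {n : ℕ} (hn : 1 ≤ n) {m a : ℝ}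
    (hm : |m| ≤ 1) (ha : |a| ≤ 1)
    (hs : sigmoid (2 * K * a ^ 2 + 2 * J * a) = (1 + a) / 2) :
    |drift K J n m - (1 - (1 - a ^ 2) * (2 * K * a + J)) * (m - a)|
      ≤ 2 * rateConst K J / n + driftConst K J * (m - a) ^ 2 := by
  have h1 := abs_upRate_sub_le J hK hn hm
  have h2 := abs_downRate_sub_le J hK hn hm
  have h3 := abs_sigmoid_taylor_le (2 * K * m ^ 2 + 2 * J * m) (2 * K * a ^ 2 + 2 * J * a)
  rw [hs] at h3
  set s := sigmoid (2 * K * m ^ 2 + 2 * J * m)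
  have hm' := abs_le.1 hm
  have ha' := abs_le.1 ha
  set X := downRate K J n m - (1 - s) with hX
  set Y := upRate K J n m - s with hY
  set T := s - (1 + a) / 2 - (1 + a) / 2 * (1 - (1 + a) / 2) *
    (2 * K * m ^ 2 + 2 * J * m - (2 * K * a ^ 2 + 2 * J * a)) with hT
  have e : drift K J n m - (1 - (1 - a ^ 2) * (2 * K * a + J)) * (m - a)
      = ((1 + m) * X - (1 - m) * Y) + (-2 * T - (1 - a ^ 2) * K * (m - a) ^ 2) := by
    unfold drift; rw [hX, hY, hT]; ring
  have hXY : |(1 + m) * X - (1 - m) * Y| ≤ 2 * rateConst K J / n := by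
    calc _ ≤ |(1 + m) * X| + |(1 - m) * Y| := abs_sub _ _
      _ = (1 + m) * |X| + (1 - m) * |Y| := by
        rw [abs_mul, abs_mul, abs_of_nonneg (by linarith : 0 ≤ 1 + m),
          abs_of_nonneg (by linarith : 0 ≤ 1 - m)]
      _ ≤ (1 + m) * (rateConst K J / n) + (1 - m) * (rateConst K J / n) := by
        gcongr <;> linarith
      _ = _ := by ring
  have hTb : |T| ≤ (4 * K + 2 * |J|) ^ 2 * (m - a) ^ 2 := by
    refine h3.trans ?_
    have e2 : (2 * K * m ^ 2 + 2 * J * m - (2 * K * a ^ 2 + 2 * J * a)) ^ 2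
        = (2 * K * (m + a) + 2 * J) ^ 2 * (m - a) ^ 2 := by ring
    rw [e2]
    gcongr ?_ * _
    rw [← sq_abs]
    gcongr
    calc _ ≤ |2 * K * (m + a)| + |2 * J| := abs_add_le _ _
      _ = 2 * K * |m + a| + 2 * |J| := by
        simp only [abs_mul, abs_of_pos hK]; norm_num
      _ ≤ 2 * K * 2 + 2 * |J| := by
        gcongr
        rw [abs_le]; constructor <;> linarith
      _ = _ := by ring
  have hq : |(1 - a ^ 2) * K * (m - a) ^ 2| ≤ K * (m - a) ^ 2 := by
    have : 0 ≤ 1 - a ^ 2 := by nlinarith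
    rw [abs_of_nonneg (by positivity)]
    gcongr
    nlinarith [sq_nonneg a]
  rw [e]
  refine (abs_add_le _ _).trans (add_le_add hXY ?_)
  calc _ ≤ |-2 * T| + |(1 - a ^ 2) * K * (m - a) ^ 2| := abs_sub _ _
    _ = 2 * |T| + |(1 - a ^ 2) * K * (m - a) ^ 2| := by rw [abs_mul]; norm_num
    _ ≤ 2 * ((4 * K + 2 * |J|) ^ 2 * (m - a) ^ 2) + K * (m - a) ^ 2 := by gcongr
    _ = _ := by unfold driftConst; ring

lemma abs_flipProb_sub_le {K : ℝ} (J : ℝ) (hK : 0 < K) {n : ℕ} (hn : 1 ≤ n) {m a : ℝ}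
    (hm : |m| ≤ 1) (ha : |a| ≤ 1)
    (hs : sigmoid (2 * K * a ^ 2 + 2 * J * a) = (1 + a) / 2) :
    |flipProb K J n m - (1 - a ^ 2) / 2|
      ≤ rateConst K J / n + (2 + 4 * K + 2 * |J|) * |m - a| := by
  have h1 := abs_upRate_sub_le J hK hn hm
  have h2 := abs_downRate_sub_le J hK hn hm
  have h3 := abs_sigmoid_sub_le (2 * K * m ^ 2 + 2 * J * m) (2 * K * a ^ 2 + 2 * J * a)
  rw [hs] at h3
  set s := sigmoid (2 * K * m ^ 2 + 2 * J * m)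
  have hm' := abs_le.1 hm
  have ha' := abs_le.1 ha
  set X := downRate K J n m - (1 - s) with hX
  set Y := upRate K J n m - s with hY
  set T := s - (1 + a) / 2 with hT
  have e : flipProb K J n m - (1 - a ^ 2) / 2
      = ((1 + m) / 2 * X + (1 - m) / 2 * Y) + (-a / 2 * (m - a) - m * T) := by
    unfold flipProb; rw [hX, hY, hT]; ring
  have hXY : |(1 + m) / 2 * X + (1 - m) / 2 * Y| ≤ rateConst K J / n := by
    calc _ ≤ |(1 + m) / 2 * X| + |(1 - m) / 2 * Y| := abs_add_le _ _
      _ = (1 + m) / 2 * |X| + (1 - m) / 2 * |Y| := by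
        rw [abs_mul, abs_mul, abs_of_nonneg (by linarith : 0 ≤ (1 + m) / 2),
          abs_of_nonneg (by linarith : 0 ≤ (1 - m) / 2)]
      _ ≤ (1 + m) / 2 * (rateConst K J / n) + (1 - m) / 2 * (rateConst K J / n) := by
        gcongr <;> linarith
      _ = _ := by ring
  have hTb : |T| ≤ (4 * K + 2 * |J|) * |m - a| := by
    refine h3.trans ?_
    have e2 : 2 * K * m ^ 2 + 2 * J * m - (2 * K * a ^ 2 + 2 * J * a)
        = (2 * K * (m + a) + 2 * J) * (m - a) := by ring
    rw [e2, abs_mul]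
    gcongr
    calc _ ≤ |2 * K * (m + a)| + |2 * J| := abs_add_le _ _
      _ = 2 * K * |m + a| + 2 * |J| := by
        simp only [abs_mul, abs_of_pos hK]; norm_num
      _ ≤ 2 * K * 2 + 2 * |J| := by
        gcongr
        rw [abs_le]; constructor <;> linarith
      _ = _ := by ring
  rw [e]
  refine (abs_add_le _ _).trans (add_le_add hXY ?_)
  calc _ ≤ |-a / 2 * (m - a)| + |m * T| := abs_sub _ _
    _ = |a| / 2 * |m - a| + |m| * |T| := by
        simp only [abs_mul, abs_div, abs_neg]; norm_num
    _ ≤ 2 * |m - a| + 1 * ((4 * K + 2 * |J|) * |m - a|) := by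
        gcongr
        linarith
    _ = _ := by ring

/-! ### The function `φ` and its critical point -/

lemma hasDerivAt_phiKJ (K J : ℝ) {m : ℝ} (hm : m ∈ Set.Ioo (-1 : ℝ) 1) :
    HasDerivAt (phiKJ K J)
      ((Real.log ((1 + m) / 2) - Real.log ((1 - m) / 2)) / 2 - K * m ^ 2 - J * m) m := by
  have h1 : (1 + m) / 2 ≠ 0 := by have := hm.1; intro h; linarith
  have h2 : (1 - m) / 2 ≠ 0 := by have := hm.2; intro h; linarith
  have d1 : HasDerivAt (fun y : ℝ => (1 + y) / 2) (1 / 2) m :=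
    ((hasDerivAt_id m).const_add 1).div_const 2
  have d2 : HasDerivAt (fun y : ℝ => (1 - y) / 2) (-1 / 2) m :=
    ((hasDerivAt_id m).const_sub 1).div_const 2
  have d3 := d1.mul (d1.log h1)
  have d4 := d2.mul (d2.log h2)
  have d5 := ((d4.add d3).sub ((hasDerivAt_pow 3 m).const_mul (K / 3))).sub
    ((hasDerivAt_pow 2 m).const_mul (J / 2))
  refine HasDerivAt.congr_deriv (f' := _) d5 ?_
  rw [mul_div_cancel₀ _ h1, mul_div_cancel₀ _ h2]
  push_cast
  ring

lemma iteratedDeriv_phiKJ (K J : ℝ) {m : ℝ} (hm : m ∈ Set.Ioo (-1 : ℝ) 1) :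
    iteratedDeriv 2 (phiKJ K J) m = 1 / (1 - m ^ 2) - 2 * K * m - J := by
  have h1 : (1 + m) ≠ 0 := by have := hm.1; intro h; linarith
  have h2 : (1 - m) ≠ 0 := by have := hm.2; intro h; linarith
  have h3 : 1 - m ^ 2 ≠ 0 := by
    rw [show 1 - m ^ 2 = (1 + m) * (1 - m) by ring]; exact mul_ne_zero h1 h2
  rw [iteratedDeriv_succ, iteratedDeriv_one]
  have he : deriv (phiKJ K J) =ᶠ[nhds m] fun m =>
      (Real.log ((1 + m) / 2) - Real.log ((1 - m) / 2)) / 2 - K * m ^ 2 - J * m := by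
    filter_upwards [isOpen_Ioo.mem_nhds hm] with y hy using (hasDerivAt_phiKJ K J hy).deriv
  rw [he.deriv_eq]
  have d1 : HasDerivAt (fun y : ℝ => (1 + y) / 2) (1 / 2) m :=
    ((hasDerivAt_id m).const_add 1).div_const 2
  have d2 : HasDerivAt (fun y : ℝ => (1 - y) / 2) (-1 / 2) m :=
    ((hasDerivAt_id m).const_sub 1).div_const 2
  have d3 := (((d1.log (by simpa using h1)).sub (d2.log (by simpa using h2))).div_const 2).sub
    ((hasDerivAt_pow 2 m).const_mul K) |>.sub ((hasDerivAt_id m).const_mul J)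
  refine (d3.congr_deriv ?_).deriv
  push_cast
  field_simp
  ring

/-- `φ'(m*) = 0`, since an interior minimum is critical. -/
lemma critical_point {K J a : ℝ} (ha : a ∈ Set.Ioo (-1 : ℝ) 1)
    (hmin : ∀ y ∈ Set.Icc (-1 : ℝ) 1, phiKJ K J a ≤ phiKJ K J y) :
    Real.log ((1 + a) / 2) - Real.log ((1 - a) / 2) = 2 * K * a ^ 2 + 2 * J * a := by
  have hl : IsLocalMin (phiKJ K J) a := by
    filter_upwards [Icc_mem_nhds ha.1 ha.2] with y hy using hmin y hy
  have := hl.hasDerivAt_eq_zero (hasDerivAt_phiKJ K J ha)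
  linarith

lemma sigmoid_critical {K J a : ℝ} (ha : a ∈ Set.Ioo (-1 : ℝ) 1)
    (hmin : ∀ y ∈ Set.Icc (-1 : ℝ) 1, phiKJ K J a ≤ phiKJ K J y) :
    sigmoid (2 * K * a ^ 2 + 2 * J * a) = (1 + a) / 2 := by
  have h1 : 0 < (1 + a) / 2 := by linarith [ha.1]
  have h2 : 0 < (1 - a) / 2 := by linarith [ha.2]
  rw [← critical_point ha hmin, sigmoid_def, neg_sub, Real.exp_sub, Real.exp_log h1,
    Real.exp_log h2]
  have : 1 + a ≠ 0 := by linarith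
  field_simp
  ring

/-! ### Large deviations of the magnetization -/

lemma sum_spin_eq (n : ℕ) (x : Fin n → Bool) :
    totalMag n x = 2 * ((Finset.univ.filter fun i => x i = true).card : ℝ) - n := by
  have h : ∀ b : Bool, spin b = 2 * (if b = true then (1 : ℝ) else 0) - 1 := by
    intro b; cases b <;> norm_num [spin]
  unfold totalMag
  simp only [h]
  rw [Finset.sum_sub_distrib, ← Finset.mul_sum, Finset.sum_boole]
  simp

lemma sum_configurations (n : ℕ) (F : ℝ → ℝ) :
    ∑ x : Fin n → Bool, F (totalMag n x)
      = ∑ k ∈ Finset.range (n + 1), (n.choose k : ℝ) * F (2 * k - n) := by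
  have h := Finset.sum_powerset_apply_card (fun k : ℕ => F (2 * k - n))
    (x := (Finset.univ : Finset (Fin n)))
  rw [Finset.card_univ, Fintype.card_fin] at h
  simp only [nsmul_eq_mul] at h
  rw [← h]
  refine Finset.sum_bij' (fun x _ => Finset.univ.filter fun i => x i = true)
    (fun s _ => fun i => decide (i ∈ s)) ?_ ?_ ?_ ?_ ?_
  · intros; simp
  · intros; simp
  · intros; simp
  · intros; simp
  · intro x _
    rw [sum_spin_eq]

lemma abs_magPP_le (n : ℕ) (hn : 1 ≤ n) (x : Fin n → Bool) : |magPP n x| ≤ 1 := by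
  have hn0 : (0 : ℝ) < n := by exact_mod_cast hn
  unfold magPP
  rw [abs_div, abs_of_pos hn0, div_le_one hn0]
  unfold totalMag
  refine (Finset.abs_sum_le_sum_abs _ _).trans ?_
  have : ∀ i, |spin (x i)| = 1 := by
    intro i; unfold spin; split_ifs <;> norm_num
  simp [this]

lemma exp_mul_log_nat (k : ℕ) {p : ℝ} (hp : 0 ≤ p) (h : p = 0 → k = 0) :
    Real.exp (k * Real.log p) = p ^ k := by
  rcases hp.eq_or_lt with h0 | h0
  · rw [h h0.symm]; simp
  · rw [mul_comm, Real.exp_mul, Real.exp_log h0, Real.rpow_natCast]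

/-- The number of configurations with `k` plus spins is at most `exp (-n I(m))`: in the
product measure with mean `m = (2k-n)/n` each of them has probability `exp (n I(m))`. -/
lemma choose_le_exp (n k : ℕ) (hn : 1 ≤ n) (hk : k ≤ n) :
    (n.choose k : ℝ) ≤ Real.exp (-(n * binEnt ((2 * k - n) / n))) := by
  have hn0 : (0 : ℝ) < n := by exact_mod_cast hn
  have hkn : (k : ℝ) ≤ n := by exact_mod_cast hk
  have e1 : (1 + (2 * (k : ℝ) - n) / n) / 2 = k / n := by field_simp; ring
  have e2 : (1 - (2 * (k : ℝ) - n) / n) / 2 = (n - k : ℕ) / n := by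
    rw [Nat.cast_sub hk]; field_simp; ring
  have e3 : (k : ℝ) / n + (n - k : ℕ) / n = 1 := by
    rw [Nat.cast_sub hk]; field_simp; ring
  have hb : n * binEnt ((2 * k - n) / n)
      = (n - k : ℕ) * Real.log ((n - k : ℕ) / n) + k * Real.log (k / n) := by
    unfold binEnt
    rw [e1, e2]; field_simp
  rw [Real.exp_neg, hb, Real.exp_add, exp_mul_log_nat _ (by positivity),
    exp_mul_log_nat _ (by positivity)]
  · have hs := (add_pow ((k : ℝ) / n) ((n - k : ℕ) / n) n).symm
    rw [e3, one_pow] at hs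
    have hle : ((k : ℝ) / n) ^ k * ((n - k : ℕ) / n : ℝ) ^ (n - k) * n.choose k ≤ 1 := by
      rw [← hs]
      exact Finset.single_le_sum
        (f := fun m => ((k : ℝ) / n) ^ m * ((n - k : ℕ) / n : ℝ) ^ (n - m) * n.choose m)
        (fun i _ => by positivity) (Finset.mem_range.2 (by omega))
    have hp1 : 0 < ((k : ℝ) / n) ^ k := by
      rcases Nat.eq_zero_or_pos k with h | h
      · subst h; simp
      · have : (0 : ℝ) < k := by exact_mod_cast h
        positivity
    have hp2 : 0 < ((n - k : ℕ) / n : ℝ) ^ (n - k) := by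
      rcases Nat.eq_zero_or_pos (n - k) with h | h
      · rw [h]; simp
      · have : (0 : ℝ) < (n - k : ℕ) := by exact_mod_cast h
        positivity
    rw [← one_div, le_div_iff₀ (by positivity)]
    linarith
  · intro h
    rcases div_eq_zero_iff.1 h with h | h
    · exact_mod_cast h
    · exact absurd h hn0.ne'
  · intro h
    rcases div_eq_zero_iff.1 h with h | h
    · exact_mod_cast h
    · exact absurd h hn0.ne'

/-- The partition function without the factor `2^{-n}`. -/
noncomputable def partitionFn (n : ℕ) (K J : ℝ) : ℝ :=
  ∑ x : Fin n → Bool, cubicWeight n K J x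

lemma partitionFn_pos (n : ℕ) (K J : ℝ) : 0 < partitionFn n K J :=
  Finset.sum_pos (fun _ _ => Real.exp_pos _) Finset.univ_nonempty

lemma cubicWeight_eq (n : ℕ) (K J : ℝ) (x : Fin n → Bool) :
    cubicWeight n K J x = Real.exp (n * energy K J (magPP n x)) := rfl

/-- Gibbs variational lower bound `Z ≥ e^{-L} e^{-n φ(m*)}`: the trial measure is the product
measure of mean `m*`. The first-order term vanishes since `φ'(m*) = 0`, and the second-order
term is controlled by the binomial variance. -/
lemma partitionFn_ge {K : ℝ} (J : ℝ) (hK : 0 < K) {a : ℝ} (ha : a ∈ Set.Ioo (-1 : ℝ) 1)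
    (hcrit : Real.log ((1 + a) / 2) - Real.log ((1 - a) / 2) = 2 * K * a ^ 2 + 2 * J * a)
    (n : ℕ) (hn : 1 ≤ n) :
    Real.exp (-(n * phiKJ K J a) - (K + |J| / 2)) ≤ partitionFn n K J := by
  have hn0 : (0 : ℝ) < n := by exact_mod_cast hn
  set p : ℝ := (1 + a) / 2 with hp
  have hq : (1 - a) / 2 = 1 - p := by rw [hp]; ring
  have hp0 : 0 < p := by rw [hp]; linarith [ha.1]
  have hp1 : 0 < 1 - p := by rw [← hq]; linarith [ha.2]
  rw [hq] at hcrit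
  set L : ℝ := K + |J| / 2 with hL
  have hL0 : 0 ≤ L := by positivity
  set B : ℕ → ℝ := fun k => n.choose k * p ^ k * (1 - p) ^ (n - k) with hB
  have hBsum : ∑ k ∈ Finset.range (n + 1), B k = 1 := by
    have := congrArg (Polynomial.eval p) (bernsteinPolynomial.sum ℝ n)
    simpa [Polynomial.eval_finsetSum, bernsteinPolynomial] using this
  have hBvar : ∑ k ∈ Finset.range (n + 1), (n * p - k) ^ 2 * B k = n * p * (1 - p) := by
    have := congrArg (Polynomial.eval p) (bernsteinPolynomial.variance ℝ n)
    simpa [Polynomial.eval_finsetSum, bernsteinPolynomial] using this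
  have hZ : partitionFn n K J = ∑ k ∈ Finset.range (n + 1),
      (n.choose k : ℝ) * Real.exp (n * energy K J ((2 * k - n) / n)) := by
    unfold partitionFn
    rw [← sum_configurations n (fun s => Real.exp (n * energy K J (s / n)))]
    rfl
  set A : ℝ := -(n * phiKJ K J a) - L with hA
  have hterm : ∀ k ∈ Finset.range (n + 1),
      Real.exp A * (B k * (1 + L) - 4 * L / n * ((n * p - k) ^ 2 * B k))
        ≤ (n.choose k : ℝ) * Real.exp (n * energy K J ((2 * k - n) / n)) := by
    intro k hk
    have hk' : k ≤ n := by simpa [Nat.lt_succ_iff] using hk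
    have hkn : (k : ℝ) ≤ n := by exact_mod_cast hk'
    have hk0 : (0 : ℝ) ≤ k := by positivity
    set y : ℝ := (2 * k - n) / n with hy
    have hy1 : y ≤ 1 := by rw [hy, div_le_one hn0]; linarith
    have hy2 : -1 ≤ y := by rw [hy, le_div_iff₀ hn0]; linarith
    set t : ℝ := n * energy K J y - k * Real.log p - (n - k : ℕ) * Real.log (1 - p) with ht
    have hBk : (n.choose k : ℝ) * Real.exp (n * energy K J y) = B k * Real.exp t := by
      have : p ^ k * (1 - p) ^ (n - k) * Real.exp t = Real.exp (n * energy K J y) := by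
        rw [← exp_mul_log_nat k hp0.le (fun h => absurd h hp0.ne'),
          ← exp_mul_log_nat (n - k) hp1.le (fun h => absurd h hp1.ne'), ← Real.exp_add,
          ← Real.exp_add, ht]
        congr 1; ring
      rw [hB]; simp only
      rw [← this]; ring
    have hky : (k : ℝ) = n * ((1 + y) / 2) := by rw [hy]; field_simp; ring
    have htA : A + L - 4 * L / n * (n * p - k) ^ 2 ≤ t := by
      have e1 : t = n * (energy K J y - (1 + y) / 2 * Real.log p
          - (1 - y) / 2 * Real.log (1 - p)) := by
        rw [ht, Nat.cast_sub hk', hky]; ring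
      have e2 : 4 * L / n * (n * p - k) ^ 2 = n * (L * (y - a) ^ 2) := by
        rw [hky, hp]; field_simp; ring
      have e3 : phiKJ K J a = (1 - p) * Real.log (1 - p) + p * Real.log p
          - energy K J a := by
        unfold phiKJ binEnt energy; rw [hq]; ring
      have e4 : Real.log p = Real.log (1 - p) + (2 * K * a ^ 2 + 2 * J * a) := by linarith
      have hpoly : -(L * (y - a) ^ 2) ≤ (y - a) ^ 2 * (K / 3 * (y + 2 * a) + J / 2) := by
        have hJ := neg_abs_le J
        have : -L ≤ K / 3 * (y + 2 * a) + J / 2 := by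
          have : K / 3 * (-3) ≤ K / 3 * (y + 2 * a) := by gcongr; linarith [ha.1]
          rw [hL]; linarith
        have := mul_le_mul_of_nonneg_left this (sq_nonneg (y - a))
        linarith
      have e5 : energy K J y - (1 + y) / 2 * Real.log p - (1 - y) / 2 * Real.log (1 - p)
          = -phiKJ K J a + (y - a) ^ 2 * (K / 3 * (y + 2 * a) + J / 2) := by
        rw [e3, e4, hp]; unfold energy; ring
      have := mul_le_mul_of_nonneg_left hpoly hn0.le
      rw [e1, e2, e5, hA]
      linarith
    have hB0 : 0 ≤ B k := by rw [hB]; positivity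
    rw [hBk]
    have hexp : Real.exp A * (1 + (t - A)) ≤ Real.exp t := by
      have := Real.add_one_le_exp (t - A)
      calc _ ≤ Real.exp A * Real.exp (t - A) := by gcongr; linarith
        _ = _ := by rw [← Real.exp_add]; congr 1; ring
    calc _ = B k * (Real.exp A * (1 + (L - 4 * L / n * (n * p - k) ^ 2))) := by ring
      _ ≤ B k * (Real.exp A * (1 + (t - A))) :=
          mul_le_mul_of_nonneg_left (mul_le_mul_of_nonneg_left (by linarith)
            (Real.exp_pos _).le) hB0
      _ ≤ _ := by gcongr
  rw [hZ]
  refine le_trans ?_ (Finset.sum_le_sum hterm)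
  rw [← Finset.mul_sum, Finset.sum_sub_distrib, ← Finset.sum_mul, ← Finset.mul_sum, hBsum, hBvar]
  have : 4 * L / n * (n * p * (1 - p)) ≤ L := by
    have : 4 * L / n * (n * p * (1 - p)) = L * (4 * p * (1 - p)) := by field_simp
    rw [this]
    nlinarith [sq_nonneg (2 * p - 1)]
  calc Real.exp A = Real.exp A * 1 := (mul_one _).symm
    _ ≤ _ := by gcongr; linarith

/-- The Gibbs probability of a single configuration. -/
noncomputable def gibbs (n : ℕ) (K J : ℝ) (x : Fin n → Bool) : ℝ :=
  cubicWeight n K J x / partitionFn n K J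

lemma gibbs_pos (n : ℕ) (K J : ℝ) (x : Fin n → Bool) : 0 < gibbs n K J x :=
  div_pos (Real.exp_pos _) (partitionFn_pos n K J)

lemma sum_gibbs (n : ℕ) (K J : ℝ) : ∑ x, gibbs n K J x = 1 := by
  unfold gibbs
  rw [← Finset.sum_div]
  exact div_self (partitionFn_pos n K J).ne'

/-- Large deviations, in the weak form that suffices here: configurations with magnetization
away from `m*` have total probability `O(1/n)`. -/
lemma prob_far_le {K : ℝ} (J : ℝ) (hK : 0 < K) {a : ℝ} (ha : a ∈ Set.Ioo (-1 : ℝ) 1)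
    (hmin : ∀ y ∈ Set.Icc (-1 : ℝ) 1, phiKJ K J a ≤ phiKJ K J y)
    (huniq : ∀ y ∈ Set.Icc (-1 : ℝ) 1, phiKJ K J y = phiKJ K J a → y = a)
    {δ : ℝ} (hδ : 0 < δ) :
    ∃ C : ℝ, 0 < C ∧ ∀ n : ℕ, 1 ≤ n →
      ∑ x, gibbs n K J x * (if δ ≤ |magPP n x - a| then 1 else 0) ≤ C / n := by
  -- the gap `η` of `φ` away from its minimizer
  obtain ⟨η, hη, hgap⟩ : ∃ η : ℝ, 0 < η ∧ ∀ y ∈ Set.Icc (-1 : ℝ) 1, δ ≤ |y - a| →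
      phiKJ K J a + η ≤ phiKJ K J y := by
    have hc : IsCompact (Set.Icc (-1 : ℝ) 1 ∩ {y | δ ≤ |y - a|}) :=
      isCompact_Icc.inter_right (isClosed_le continuous_const (by fun_prop))
    rcases (Set.Icc (-1 : ℝ) 1 ∩ {y | δ ≤ |y - a|}).eq_empty_or_nonempty with he | hne
    · refine ⟨1, one_pos, fun y hy h => ?_⟩
      have : y ∈ Set.Icc (-1 : ℝ) 1 ∩ {y | δ ≤ |y - a|} := ⟨hy, h⟩
      rw [he] at this
      exact absurd this (Set.notMem_empty y)
    · obtain ⟨z, hz, hzmin⟩ := hc.exists_isMinOn hne (continuous_phiKJ K J).continuousOn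
      refine ⟨phiKJ K J z - phiKJ K J a, ?_, fun y hy h => ?_⟩
      · refine sub_pos.2 (lt_of_le_of_ne (hmin z hz.1) fun h => ?_)
        have := huniq z hz.1 h.symm
        have h2 : δ ≤ |z - a| := hz.2
        rw [this, sub_self, abs_zero] at h2
        linarith
      · have : phiKJ K J z ≤ phiKJ K J y := hzmin ⟨hy, h⟩
        linarith
  set L : ℝ := K + |J| / 2 with hL
  refine ⟨4 * Real.exp L / η ^ 2, by positivity, fun n hn => ?_⟩
  have hn0 : (0 : ℝ) < n := by exact_mod_cast hn
  have hn1 : (1 : ℝ) ≤ n := by exact_mod_cast hn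
  have hZ := partitionFn_ge J hK ha (critical_point ha hmin) n hn
  have hsum : ∑ x, cubicWeight n K J x * (if δ ≤ |magPP n x - a| then (1 : ℝ) else 0)
      ≤ (n + 1) * Real.exp (-(n * (phiKJ K J a + η))) := by
    have e := sum_configurations n (fun s => Real.exp (n * energy K J (s / n)) *
      (if δ ≤ |s / n - a| then (1 : ℝ) else 0))
    have e' : ∑ x, cubicWeight n K J x * (if δ ≤ |magPP n x - a| then (1 : ℝ) else 0)
      = ∑ x, (fun s => Real.exp (n * energy K J (s / n)) *
      (if δ ≤ |s / n - a| then (1 : ℝ) else 0)) (totalMag n x) := rfl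
    rw [e', e]
    have : ∀ k ∈ Finset.range (n + 1), (n.choose k : ℝ) *
        (Real.exp (n * energy K J ((2 * k - n) / n)) *
          (if δ ≤ |(2 * k - n) / n - a| then (1 : ℝ) else 0))
        ≤ Real.exp (-(n * (phiKJ K J a + η))) := by
      intro k hk
      have hk' : k ≤ n := by simpa [Nat.lt_succ_iff] using hk
      have hkn : (k : ℝ) ≤ n := by exact_mod_cast hk'
      have hk0 : (0 : ℝ) ≤ k := by positivity
      split_ifs with h
      · have hg := hgap ((2 * k - n) / n)
          ⟨by rw [le_div_iff₀ hn0]; linarith, by rw [div_le_one hn0]; linarith⟩ h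
        rw [mul_one]
        calc _ ≤ Real.exp (-(n * binEnt ((2 * k - n) / n))) *
              Real.exp (n * energy K J ((2 * k - n) / n)) := by
              gcongr; exact choose_le_exp n k hn hk'
          _ = Real.exp (-(n * phiKJ K J ((2 * k - n) / n))) := by
              rw [← Real.exp_add]; congr 1; unfold phiKJ energy; ring
          _ ≤ _ := by gcongr
      · rw [mul_zero, mul_zero]; positivity
    refine (Finset.sum_le_sum this).trans ?_
    simp
  have hpoly : (n + 1) * Real.exp (-(n * η)) ≤ 4 / η ^ 2 / n := by
    have h1 := Real.quadratic_le_exp_of_nonneg (x := n * η) (by positivity)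
    rw [Real.exp_neg, ← div_eq_mul_inv, div_div, div_le_div_iff₀ (by positivity) (by positivity)]
    have h2 : (n * η) ^ 2 / 2 ≤ Real.exp (n * η) := by
      have : 0 ≤ n * η := by positivity
      linarith
    have h3 : ((n : ℝ) + 1) * (η ^ 2 * n) ≤ 4 * ((n * η) ^ 2 / 2) := by
      have : ((n : ℝ) + 1) * n ≤ 2 * n * n := by nlinarith
      nlinarith [sq_nonneg η]
    linarith
  have hgoal : ∑ x, gibbs n K J x * (if δ ≤ |magPP n x - a| then (1 : ℝ) else 0)
      = (∑ x, cubicWeight n K J x * (if δ ≤ |magPP n x - a| then (1 : ℝ) else 0))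
        / partitionFn n K J := by
    rw [Finset.sum_div]
    refine Finset.sum_congr rfl fun x _ => ?_
    unfold gibbs; ring
  rw [hgoal]
  calc _ ≤ ((n + 1) * Real.exp (-(n * (phiKJ K J a + η)))) /
        Real.exp (-(n * phiKJ K J a) - L) := by
        gcongr
    _ = Real.exp L * ((n + 1) * Real.exp (-(n * η))) := by
        rw [div_eq_iff (Real.exp_pos _).ne']
        have : Real.exp (-(n * (phiKJ K J a + η))) = Real.exp L * Real.exp (-(n * η)) *
            Real.exp (-(n * phiKJ K J a) - L) := by
          rw [← Real.exp_add, ← Real.exp_add]; congr 1; ring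
        rw [this]; ring
    _ ≤ Real.exp L * (4 / η ^ 2 / n) := by gcongr
    _ = _ := by ring

/-! ### The stationary Glauber step -/

lemma totalMag_update (n : ℕ) (x : Fin n → Bool) (i : Fin n) (b : Bool) :
    totalMag n (Function.update x i b) = totalMag n x + (spin b - spin (x i)) := by
  unfold totalMag
  rw [← Finset.add_sum_erase _ _ (Finset.mem_univ i),
    ← Finset.add_sum_erase Finset.univ (fun j => spin (x j)) (Finset.mem_univ i)]
  have : ∑ j ∈ Finset.univ.erase i, spin (Function.update x i b j)
      = ∑ j ∈ Finset.univ.erase i, spin (x j) := by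
    refine Finset.sum_congr rfl fun j hj => ?_
    rw [Function.update_of_ne (Finset.ne_of_mem_erase hj)]
  rw [this, Function.update_self]
  ring

lemma magPP_update (n : ℕ) (x : Fin n → Bool) (i : Fin n) (b : Bool) :
    magPP n (Function.update x i b) = magPP n x + (spin b - spin (x i)) / n := by
  unfold magPP
  rw [totalMag_update, add_div]

/-- The conditional probability under the Gibbs measure that spin `i` equals `b`, given all
other spins of `x`. -/
noncomputable def resample (n : ℕ) (K J : ℝ) (x : Fin n → Bool) (i : Fin n) (b : Bool) : ℝ :=
  cubicWeight n K J (Function.update x i b) /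
    (cubicWeight n K J (Function.update x i true) +
      cubicWeight n K J (Function.update x i false))

lemma cubicWeight_pos (n : ℕ) (K J : ℝ) (x : Fin n → Bool) : 0 < cubicWeight n K J x :=
  Real.exp_pos _

lemma resample_nonneg (n : ℕ) (K J : ℝ) (x : Fin n → Bool) (i : Fin n) (b : Bool) :
    0 ≤ resample n K J x i b := by
  have := cubicWeight_pos n K J
  exact div_nonneg (this _).le (add_pos (this _) (this _)).le

lemma sum_resample (n : ℕ) (K J : ℝ) (x : Fin n → Bool) (i : Fin n) :
    ∑ b, resample n K J x i b = 1 := by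
  have := cubicWeight_pos n K J
  rw [Fintype.sum_bool]
  unfold resample
  rw [← add_div]
  exact div_self (add_pos (this _) (this _)).ne'

lemma exp_div_add_exp (u v : ℝ) :
    Real.exp u / (Real.exp v + Real.exp u) = sigmoid (u - v) := by
  rw [sigmoid_def, neg_sub, Real.exp_sub]
  have := Real.exp_pos u
  have := Real.exp_pos v
  field_simp
  ring

lemma resample_false {n : ℕ} (K J : ℝ) {x : Fin n → Bool} {i : Fin n} (h : x i = true) :
    resample n K J x i false = downRate K J n (magPP n x) := by
  have hx : Function.update x i true = x := by rw [← h, Function.update_eq_self]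
  unfold resample downRate
  rw [hx, cubicWeight_eq, cubicWeight_eq, magPP_update, h, exp_div_add_exp]
  congr 5
  norm_num [spin]
  ring

lemma resample_true {n : ℕ} (K J : ℝ) {x : Fin n → Bool} {i : Fin n} (h : x i = false) :
    resample n K J x i true = upRate K J n (magPP n x) := by
  have hx : Function.update x i false = x := by rw [← h, Function.update_eq_self]
  unfold resample upRate
  rw [hx, add_comm, cubicWeight_eq, cubicWeight_eq, magPP_update, h, exp_div_add_exp]
  congr 5
  norm_num [spin]

lemma sum_over_sites {n : ℕ} (hn : 1 ≤ n) (x : Fin n → Bool) (G : Bool → ℝ) :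
    ∑ i, G (x i) = n * ((1 + magPP n x) / 2 * G true + (1 - magPP n x) / 2 * G false) := by
  have hn0 : (n : ℝ) ≠ 0 := by exact_mod_cast (by omega : n ≠ 0)
  have h : ∀ b, G b = (G true + G false) / 2 + spin b * ((G true - G false) / 2) := by
    intro b; cases b <;> simp [spin] <;> ring
  rw [Finset.sum_congr rfl fun i _ => h (x i), Finset.sum_add_distrib, ← Finset.sum_mul]
  unfold magPP
  change _ + totalMag n x * _ = _
  simp only [Finset.sum_const, Finset.card_univ, Fintype.card_fin, nsmul_eq_mul]
  field_simp
  ring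

/-- Averaging a function of the increment `S_n − S_n'` over one Glauber step. -/
lemma sum_step {n : ℕ} (hn : 1 ≤ n) (K J : ℝ) (x : Fin n → Bool) (G : ℝ → ℝ) (hG : G 0 = 0) :
    ∑ i, ∑ b, resample n K J x i b * G (spin (x i) - spin b)
      = n * ((1 + magPP n x) / 2 * (downRate K J n (magPP n x) * G 2)
        + (1 - magPP n x) / 2 * (upRate K J n (magPP n x) * G (-2))) := by
  have h : ∀ i, ∑ b, resample n K J x i b * G (spin (x i) - spin b)
      = (fun b : Bool => if b then downRate K J n (magPP n x) * G 2
          else upRate K J n (magPP n x) * G (-2)) (x i) := by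
    intro i
    rw [Fintype.sum_bool]
    rcases hx : x i with _ | _
    · rw [resample_true K J hx]
      norm_num [spin, hG]
    · rw [resample_false K J hx]
      norm_num [spin, hG]
  refine (Finset.sum_congr rfl fun i _ => h i).trans ((sum_over_sites hn x
    (fun b : Bool => if b then downRate K J n (magPP n x) * G 2
      else upRate K J n (magPP n x) * G (-2))).trans ?_)
  simp

/-- A Glauber step: the current configuration, the site chosen, and its new spin. -/
abbrev Step (n : ℕ) := (Fin n → Bool) × Fin n × Bool

/-- The configuration after the Glauber step. -/
def Step.next {n : ℕ} (t : Step n) : Fin n → Bool := Function.update t.1 t.2.1 t.2.2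

/-- Time reversal of a Glauber step. -/
def Step.rev {n : ℕ} (t : Step n) : Step n := (t.next, t.2.1, t.1 t.2.1)

/-- Stationary probability of a Glauber step. -/
noncomputable def stepProb (n : ℕ) (K J : ℝ) (t : Step n) : ℝ :=
  gibbs n K J t.1 / n * resample n K J t.1 t.2.1 t.2.2

lemma Step.rev_rev {n : ℕ} (t : Step n) : t.rev.rev = t := by
  obtain ⟨x, i, b⟩ := t
  simp [Step.rev, Step.next]

lemma Step.rev_next {n : ℕ} (t : Step n) : t.rev.next = t.1 := by
  obtain ⟨x, i, b⟩ := t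
  simp [Step.rev, Step.next]

/-- Detailed balance. -/
lemma stepProb_rev (n : ℕ) (K J : ℝ) (t : Step n) : stepProb n K J t.rev = stepProb n K J t := by
  obtain ⟨x, i, b⟩ := t
  simp only [stepProb, Step.rev, Step.next, resample, gibbs, Function.update_idem,
    Function.update_eq_self]
  ring

lemma stepProb_nonneg (n : ℕ) (K J : ℝ) (t : Step n) : 0 ≤ stepProb n K J t :=
  mul_nonneg (div_nonneg (gibbs_pos n K J _).le (by positivity)) (resample_nonneg n K J _ _ _)

lemma sum_stepProb_rev (n : ℕ) (K J : ℝ) (F : Step n → ℝ) :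
    ∑ t, stepProb n K J t * F t.rev = ∑ t, stepProb n K J t * F t := by
  have h := Equiv.sum_comp (Function.Involutive.toPerm Step.rev (Step.rev_rev (n := n)))
    (fun t => stepProb n K J t * F t)
  rw [← h]
  refine Finset.sum_congr rfl fun t _ => ?_
  change _ = stepProb n K J t.rev * F t.rev
  rw [stepProb_rev]

lemma sum_stepProb_mul (n : ℕ) (K J : ℝ) (F : Step n → ℝ) :
    ∑ t, stepProb n K J t * F t
      = ∑ x, gibbs n K J x / n * ∑ i, ∑ b, resample n K J x i b * F (x, i, b) := by
  rw [Fintype.sum_prod_type]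
  refine Finset.sum_congr rfl fun x _ => ?_
  rw [Fintype.sum_prod_type, Finset.mul_sum]
  refine Finset.sum_congr rfl fun i _ => ?_
  rw [Finset.mul_sum]
  refine Finset.sum_congr rfl fun b _ => ?_
  simp only [stepProb]
  ring

lemma sum_stepProb_fst {n : ℕ} (hn : 1 ≤ n) (K J : ℝ) (F : (Fin n → Bool) → ℝ) :
    ∑ t, stepProb n K J t * F t.1 = ∑ x, gibbs n K J x * F x := by
  have hn0 : (n : ℝ) ≠ 0 := by exact_mod_cast (by omega : n ≠ 0)
  rw [sum_stepProb_mul]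
  refine Finset.sum_congr rfl fun x _ => ?_
  simp only [← Finset.sum_mul, sum_resample, one_mul, Finset.sum_const, Finset.card_univ,
    Fintype.card_fin, nsmul_eq_mul]
  field_simp

lemma totalMag_sub_next {n : ℕ} (x : Fin n → Bool) (i : Fin n) (b : Bool) :
    totalMag n x - totalMag n (Step.next (x, i, b)) = spin (x i) - spin b := by
  rw [Step.next, totalMag_update]; ring

lemma sum_stepProb_diff {n : ℕ} (hn : 1 ≤ n) (K J : ℝ) (F : (Fin n → Bool) → ℝ) :
    ∑ t : Step n, stepProb n K J t * ((totalMag n t.1 - totalMag n t.next) * F t.1)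
      = ∑ x, gibbs n K J x * (drift K J n (magPP n x) * F x) := by
  have hn0 : (n : ℝ) ≠ 0 := by exact_mod_cast (by omega : n ≠ 0)
  rw [sum_stepProb_mul]
  refine Finset.sum_congr rfl fun x _ => ?_
  simp only [totalMag_sub_next, ← mul_assoc, ← Finset.sum_mul]
  rw [sum_step hn K J x (fun y => y) rfl]
  unfold drift
  field_simp
  ring

lemma sum_stepProb_diff_sq {n : ℕ} (hn : 1 ≤ n) (K J : ℝ) (F : (Fin n → Bool) → ℝ) :
    ∑ t : Step n, stepProb n K J t * ((totalMag n t.1 - totalMag n t.next) ^ 2 * F t.1)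
      = ∑ x, gibbs n K J x * (4 * flipProb K J n (magPP n x) * F x) := by
  have hn0 : (n : ℝ) ≠ 0 := by exact_mod_cast (by omega : n ≠ 0)
  rw [sum_stepProb_mul]
  refine Finset.sum_congr rfl fun x _ => ?_
  simp only [totalMag_sub_next, ← mul_assoc, ← Finset.sum_mul]
  rw [sum_step hn K J x (fun y => y ^ 2) (by norm_num)]
  unfold flipProb
  field_simp
  ring

lemma abs_totalMag_sub_next_le {n : ℕ} (t : Step n) :
    |totalMag n t.1 - totalMag n t.next| ≤ 2 := by
  obtain ⟨x, i, b⟩ := t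
  rw [totalMag_sub_next]
  unfold spin
  split_ifs <;> norm_num

/-! ### Second moment of the magnetization -/

/-- Exchangeability identity `E[(S − S')(m − a)] = (1/(2n)) E[(S − S')²] ≤ 2/n`, written in
terms of the drift. -/
lemma sum_drift_mul_le {n : ℕ} (hn : 1 ≤ n) (K J a : ℝ) :
    ∑ x, gibbs n K J x * (drift K J n (magPP n x) * (magPP n x - a)) ≤ 2 / n := by
  have hn0 : (0 : ℝ) < n := by exact_mod_cast hn
  rw [← sum_stepProb_diff hn K J (fun x => magPP n x - a)]
  have h := sum_stepProb_rev n K J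
    (fun t => (totalMag n t.1 - totalMag n t.next) * (magPP n t.1 - a))
  simp only [Step.rev_next] at h
  have h2 : ∑ t : Step n, stepProb n K J t *
        ((totalMag n t.1 - totalMag n t.next) * (magPP n t.1 - a)) +
      ∑ t : Step n, stepProb n K J t *
        ((totalMag n t.rev.1 - totalMag n t.1) * (magPP n t.rev.1 - a)) ≤
      ∑ t : Step n, stepProb n K J t * (4 / n) := by
    rw [← Finset.sum_add_distrib]
    refine Finset.sum_le_sum fun t _ => ?_
    rw [← mul_add]
    refine mul_le_mul_of_nonneg_left ?_ (stepProb_nonneg n K J t)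
    have e : (totalMag n t.1 - totalMag n t.next) * (magPP n t.1 - a) +
        (totalMag n t.rev.1 - totalMag n t.1) * (magPP n t.rev.1 - a)
        = (totalMag n t.1 - totalMag n t.next) ^ 2 / n := by
      change _ + (totalMag n t.next - totalMag n t.1) * (magPP n t.next - a) = _
      unfold magPP
      field_simp
      ring
    rw [e]
    gcongr
    have := abs_le.1 (abs_totalMag_sub_next_le t)
    nlinarith
  have h3 := sum_stepProb_fst hn K J (fun _ => 4 / (n : ℝ))
  have h4 : ∑ x, gibbs n K J x * (4 / (n : ℝ)) = 4 / n := by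
    rw [← Finset.sum_mul, sum_gibbs, one_mul]
  rw [h3, h4, h] at h2
  have : (4 : ℝ) / n = 2 * (2 / n) := by ring
  linarith

/-- Second-moment bound `E(m_n − m*)² = O(1/n)`. Near `m*` the drift dominates a multiple of
`m − m*`, so the exchangeability identity controls the second moment up to the contribution of
`|m − m*| ≥ δ`, where the large deviation bound applies. -/
lemma second_moment_le {K : ℝ} (J : ℝ) (hK : 0 < K) {a : ℝ} (ha : a ∈ Set.Ioo (-1 : ℝ) 1)
    (hmin : ∀ y ∈ Set.Icc (-1 : ℝ) 1, phiKJ K J a ≤ phiKJ K J y)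
    (huniq : ∀ y ∈ Set.Icc (-1 : ℝ) 1, phiKJ K J y = phiKJ K J a → y = a)
    (hl : 0 < 1 - (1 - a ^ 2) * (2 * K * a + J)) :
    ∃ C : ℝ, 0 < C ∧ ∀ n : ℕ, 1 ≤ n →
      ∑ x, gibbs n K J x * (magPP n x - a) ^ 2 ≤ C / n := by
  set l := 1 - (1 - a ^ 2) * (2 * K * a + J) with hldef
  have hD := driftConst_pos J hK
  have hR := rateConst_pos J hK
  set D := driftConst K J
  obtain ⟨C, hC, hfar⟩ := prob_far_le J hK ha hmin huniq (δ := l / (2 * D)) (by positivity)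
  refine ⟨2 / l * (2 + 4 * rateConst K J + 8 * D * C), by positivity, fun n hn => ?_⟩
  have hn0 : (0 : ℝ) < n := by exact_mod_cast hn
  have hfar := hfar n hn
  have ha1 : |a| ≤ 1 := abs_le.2 ⟨ha.1.le, ha.2.le⟩
  have hpt : ∀ x : Fin n → Bool, l / 2 * (magPP n x - a) ^ 2 ≤
      drift K J n (magPP n x) * (magPP n x - a) + 4 * rateConst K J / n
        + 8 * D * (if l / (2 * D) ≤ |magPP n x - a| then 1 else 0) := by
    intro x
    have hm := abs_magPP_le n hn x
    have hm' := abs_le.1 hm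
    have h := abs_drift_sub_le J hK hn hm ha1 (sigmoid_critical ha hmin)
    set m := magPP n x
    set d := m - a with hd
    have hd2 : |d| ≤ 2 := by
      rw [hd, abs_le]; constructor <;> linarith [ha.1, ha.2]
    have hmul : -(|d| * (2 * rateConst K J / n + D * d ^ 2)) ≤
        (drift K J n m - l * d) * d := by
      have := neg_abs_le ((drift K J n m - l * d) * d)
      rw [abs_mul, mul_comm |_|] at this
      have h2 := mul_le_mul_of_nonneg_left h (abs_nonneg d)
      linarith
    have h1 : |d| * (2 * rateConst K J / n) ≤ 4 * rateConst K J / n := by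
      calc _ ≤ 2 * (2 * rateConst K J / n) := by gcongr
        _ = _ := by ring
    have h3 : |d| * (D * d ^ 2) ≤ l / 2 * d ^ 2 +
        8 * D * (if l / (2 * D) ≤ |d| then 1 else 0) := by
      split_ifs with hc
      · have : |d| * (D * d ^ 2) ≤ 2 * (D * 2 ^ 2) := by
          rw [← sq_abs d]; gcongr
        have : 0 ≤ l / 2 * d ^ 2 := by positivity
        linarith
      · have : |d| * D ≤ l / 2 := by
          have := (lt_div_iff₀ (by positivity)).1 (not_le.1 hc)
          linarith
        have := mul_le_mul_of_nonneg_right this (sq_nonneg d)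
        linarith
    linarith
  have hsum : l / 2 * ∑ x, gibbs n K J x * (magPP n x - a) ^ 2 ≤
      ∑ x, gibbs n K J x * (drift K J n (magPP n x) * (magPP n x - a))
        + 4 * rateConst K J / n + 8 * D * ∑ x, gibbs n K J x *
          (if l / (2 * D) ≤ |magPP n x - a| then 1 else 0) := by
    have h1 : 4 * rateConst K J / n = ∑ x, gibbs n K J x * (4 * rateConst K J / n) := by
      rw [← Finset.sum_mul, sum_gibbs, one_mul]
    rw [h1, Finset.mul_sum, Finset.mul_sum, ← Finset.sum_add_distrib, ← Finset.sum_add_distrib]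
    refine Finset.sum_le_sum fun x _ => ?_
    have := mul_le_mul_of_nonneg_left (hpt x) (gibbs_pos n K J x).le
    linarith
  have h4 := sum_drift_mul_le hn K J a
  have h5 := mul_le_mul_of_nonneg_left hfar (by positivity : 0 ≤ 8 * D)
  have h6 : l / 2 * ∑ x, gibbs n K J x * (magPP n x - a) ^ 2
      ≤ (2 + 4 * rateConst K J + 8 * D * C) / n := by
    refine (hsum.trans (add_le_add (add_le_add_left h4 _) h5)).trans (le_of_eq ?_)
    ring
  calc _ = 2 / l * (l / 2 * ∑ x, gibbs n K J x * (magPP n x - a) ^ 2) := by field_simp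
    _ ≤ 2 / l * ((2 + 4 * rateConst K J + 8 * D * C) / n) := by gcongr
    _ = _ := by ring

/-! ### Finitely supported laws -/

/-- The law of a random element taking the value `P t` with probability `ρ t`. -/
noncomputable def finLaw {ι E : Type*} [Fintype ι] [MeasurableSpace E] (ρ : ι → ℝ) (P : ι → E) :
    Measure E :=
  ∑ t, ENNReal.ofReal (ρ t) • Measure.dirac (P t)

section finLaw

variable {ι E F : Type*} [Fintype ι] [MeasurableSpace E] [MeasurableSpace F] {ρ : ι → ℝ}

lemma finLaw_apply (hρ : ∀ t, 0 ≤ ρ t) (P : ι → E) {s : Set E} (hs : MeasurableSet s) :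
    finLaw ρ P s = ENNReal.ofReal (∑ t, ρ t * s.indicator (fun _ => (1 : ℝ)) (P t)) := by
  unfold finLaw
  rw [Measure.finsetSum_apply, ENNReal.ofReal_sum_of_nonneg]
  · refine Finset.sum_congr rfl fun t _ => ?_
    rw [Measure.smul_apply, Measure.dirac_apply' _ hs, smul_eq_mul, ENNReal.ofReal_mul (hρ t)]
    congr 1
    by_cases h : P t ∈ s <;> simp [h]
  · intro t _
    refine mul_nonneg (hρ t) (Set.indicator_nonneg (fun _ _ => zero_le_one) _)

instance isFiniteMeasure_finLaw (P : ι → E) : IsFiniteMeasure (finLaw ρ P) := by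
  constructor
  unfold finLaw
  rw [Measure.finsetSum_apply]
  refine ENNReal.sum_lt_top.2 fun t _ => ?_
  simp

lemma integrable_finLaw [MeasurableSingletonClass E] (P : ι → E) (f : E → ℝ) :
    Integrable f (finLaw ρ P) := by
  unfold finLaw
  rw [integrable_finsetSum_measure]
  intro t _
  exact (integrable_dirac (by simp)).smul_measure ENNReal.ofReal_ne_top

lemma integral_finLaw [MeasurableSingletonClass E] (hρ : ∀ t, 0 ≤ ρ t) (P : ι → E)
    (f : E → ℝ) : ∫ p, f p ∂(finLaw ρ P) = ∑ t, ρ t * f (P t) := by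
  unfold finLaw
  rw [integral_finsetSum_measure]
  · refine Finset.sum_congr rfl fun t _ => ?_
    rw [integral_smul_measure, integral_dirac, ENNReal.toReal_ofReal (hρ t), smul_eq_mul]
  · intro t _
    exact (integrable_dirac (by simp)).smul_measure ENNReal.ofReal_ne_top

lemma map_finLaw (hρ : ∀ t, 0 ≤ ρ t) (P : ι → E) {f : E → F} (hf : Measurable f) :
    (finLaw ρ P).map f = finLaw ρ (fun t => f (P t)) := by
  ext s hs
  rw [Measure.map_apply hf hs, finLaw_apply hρ _ (hf hs), finLaw_apply hρ _ hs]
  rfl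

lemma ae_finLaw (hρ : ∀ t, 0 ≤ ρ t) (P : ι → E) {Q : E → Prop} (hQ : MeasurableSet {p | Q p})
    (h : ∀ t, Q (P t)) : ∀ᵐ p ∂(finLaw ρ P), Q p := by
  rw [ae_iff]
  have : {p | ¬ Q p} = {p | Q p}ᶜ := rfl
  rw [this, finLaw_apply hρ _ hQ.compl]
  simp [h]

/-- Conditional expectation given the first coordinate, for a finitely supported joint law. -/
lemma condExp_finLaw (hρ : ∀ t, 0 ≤ ρ t) (P : ι → ℝ × ℝ) (f : ℝ × ℝ → ℝ) {g : ℝ → ℝ}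
    (hg : Measurable g)
    (h : ∀ G : ℝ → ℝ, ∑ t, ρ t * (f (P t) * G (P t).1) = ∑ t, ρ t * (g (P t).1 * G (P t).1)) :
    (finLaw ρ P)[f | MeasurableSpace.comap (Prod.fst : ℝ × ℝ → ℝ) Real.measurableSpace]
      =ᵐ[finLaw ρ P] fun p => g p.1 := by
  have hm : MeasurableSpace.comap (Prod.fst : ℝ × ℝ → ℝ) Real.measurableSpace
      ≤ (inferInstance : MeasurableSpace (ℝ × ℝ)) := measurable_fst.comap_le
  refine (ae_eq_condExp_of_forall_setIntegral_eq hm (integrable_finLaw P f)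
    (fun s _ _ => (integrable_finLaw P _).integrableOn) ?_ ?_).symm
  · rintro s ⟨B, hB, rfl⟩ _
    have hB' : MeasurableSet ((Prod.fst : ℝ × ℝ → ℝ) ⁻¹' B) := measurable_fst hB
    rw [← integral_indicator hB', ← integral_indicator hB', integral_finLaw hρ, integral_finLaw hρ]
    have h1 := h (B.indicator fun _ => 1)
    have e : ∀ k : ℝ × ℝ → ℝ, ∀ p : ℝ × ℝ,
        ((Prod.fst : ℝ × ℝ → ℝ) ⁻¹' B).indicator k p = k p * B.indicator (fun _ => 1) p.1 := by
      intro k p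
      by_cases hp : p.1 ∈ B
      · rw [Set.indicator_of_mem (show p ∈ (Prod.fst : ℝ × ℝ → ℝ) ⁻¹' B from hp),
          Set.indicator_of_mem hp, mul_one]
      · rw [Set.indicator_of_notMem (show p ∉ (Prod.fst : ℝ × ℝ → ℝ) ⁻¹' B from hp),
          Set.indicator_of_notMem hp, mul_zero]
    simp only [e]
    exact h1.symm
  · have : Measurable[MeasurableSpace.comap (Prod.fst : ℝ × ℝ → ℝ) Real.measurableSpace]
        fun p : ℝ × ℝ => g p.1 := hg.comp (comap_measurable _)
    exact this.stronglyMeasurable.aestronglyMeasurable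

end finLaw

/-! ### Construction of the pair -/

lemma cubicMeasure_eq (n : ℕ) (K J : ℝ) : cubicMeasure n K J = finLaw (gibbs n K J) id := by
  unfold cubicMeasure finLaw
  rw [Finset.smul_sum]
  refine Finset.sum_congr rfl fun x _ => ?_
  rw [smul_smul, ← ENNReal.ofReal_sum_of_nonneg fun x _ => (cubicWeight_pos n K J x).le]
  congr 1
  unfold gibbs
  rw [ENNReal.ofReal_div_of_pos (partitionFn_pos n K J), mul_comm]
  rfl

lemma continuous_drift (K J : ℝ) (n : ℕ) : Continuous (drift K J n) := by
  have := continuous_sigmoid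
  unfold drift downRate upRate energy
  fun_prop

lemma continuous_flipProb (K J : ℝ) (n : ℕ) : Continuous (flipProb K J n) := by
  have := continuous_sigmoid
  unfold flipProb downRate upRate energy
  fun_prop

/-- First absolute moment from the second one, by the arithmetic-geometric mean inequality. -/
lemma sum_gibbs_abs_le {K J a C : ℝ} {n : ℕ} (hn : 1 ≤ n)
    (h : ∑ x, gibbs n K J x * (magPP n x - a) ^ 2 ≤ C / n) :
    ∑ x, gibbs n K J x * |magPP n x - a| ≤ (C + 1) / Real.sqrt n := by
  have hn0 : (0 : ℝ) < n := by exact_mod_cast hn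
  have hs : 0 < Real.sqrt n := Real.sqrt_pos.2 hn0
  have hss : Real.sqrt n * Real.sqrt n = n := Real.mul_self_sqrt hn0.le
  have hpt : ∀ d : ℝ, |d| ≤ Real.sqrt n * d ^ 2 + 1 / Real.sqrt n := by
    intro d
    have e : Real.sqrt n * d ^ 2 + 1 / Real.sqrt n - |d|
        = ((Real.sqrt n * |d| - 1 / 2) ^ 2 + 3 / 4) / Real.sqrt n := by
      rw [← sq_abs d]; field_simp; ring
    have : 0 ≤ ((Real.sqrt n * |d| - 1 / 2) ^ 2 + 3 / 4) / Real.sqrt n := by positivity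
    linarith
  calc _ ≤ ∑ x, gibbs n K J x * (Real.sqrt n * (magPP n x - a) ^ 2 + 1 / Real.sqrt n) :=
        Finset.sum_le_sum fun x _ =>
          mul_le_mul_of_nonneg_left (hpt _) (gibbs_pos n K J x).le
    _ = Real.sqrt n * ∑ x, gibbs n K J x * (magPP n x - a) ^ 2 + 1 / Real.sqrt n := by
        simp only [mul_add, Finset.sum_add_distrib, ← Finset.sum_mul, sum_gibbs, one_mul]
        rw [Finset.mul_sum]
        congr 1
        exact Finset.sum_congr rfl fun x _ => by ring
    _ ≤ Real.sqrt n * (C / n) + 1 / Real.sqrt n := by gcongr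
    _ = _ := by
        nth_rw 2 [← hss]
        field_simp

/-- Construction of the Glauber-dynamics exchangeable pair for the cubic
Curie–Weiss model: for the unique nondegenerate minimizer `m*` of `φ_{K,J}` there is
`C > 0` such that for each `n ≥ 1` there is an exchangeable pair (realized by its
joint law `ν` on `ℝ × ℝ`, with `W = fst`, `W' = snd`) whose first marginal is the
law of `(S_n − n m*)/σ_n` under `P_{n,K,J}`, with `|W − W'| ≤ 2/σ_n` a.s.,
`E(W − W'|W) = λ_n W + R_n` for a `σ(W)`-measurable `R_n` with
`E|R_n| ≤ C n^{−3/2}`, and `E|1 − (1/(2λ_n)) E((W−W')²|W)| ≤ C n^{−1/2}`. -/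
theorem stmt_15 (K J : ℝ) (hK : 0 < K) (mstar : ℝ)
    (hmem : mstar ∈ Set.Ioo (-1 : ℝ) 1)
    (hmin : ∀ y ∈ Set.Icc (-1 : ℝ) 1, phiKJ K J mstar ≤ phiKJ K J y)
    (huniq : ∀ y ∈ Set.Icc (-1 : ℝ) 1, phiKJ K J y = phiKJ K J mstar → y = mstar)
    (hconv : 0 < iteratedDeriv 2 (phiKJ K J) mstar) :
    ∃ C : ℝ, 0 < C ∧ ∀ n : ℕ, 1 ≤ n →
      ∃ ν : Measure (ℝ × ℝ), IsProbabilityMeasure ν ∧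
        ν.map Prod.swap = ν ∧
        ν.map Prod.fst = (cubicMeasure n K J).map
          (fun x => (totalMag n x - n * mstar) /
            Real.sqrt (n / iteratedDeriv 2 (phiKJ K J) mstar)) ∧
        (∀ᵐ p ∂ν, |p.1 - p.2| ≤
          2 / Real.sqrt (n / iteratedDeriv 2 (phiKJ K J) mstar)) ∧
        ∃ R : ℝ × ℝ → ℝ,
          Measurable[MeasurableSpace.comap (Prod.fst : ℝ × ℝ → ℝ) Real.measurableSpace] R ∧
          ((ν[fun p => p.1 - p.2 |
              MeasurableSpace.comap (Prod.fst : ℝ × ℝ → ℝ) Real.measurableSpace])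
            =ᵐ[ν] fun p =>
              (1 - mstar ^ 2) * iteratedDeriv 2 (phiKJ K J) mstar / n * p.1 + R p) ∧
          (∫ p, |R p| ∂ν) ≤ C * (n : ℝ) ^ (-(3/2 : ℝ)) ∧
          (∫ p, |1 - (1 / (2 * ((1 - mstar ^ 2) * iteratedDeriv 2 (phiKJ K J) mstar / n))) *
              (ν[fun p => (p.1 - p.2) ^ 2 |
                MeasurableSpace.comap (Prod.fst : ℝ × ℝ → ℝ) Real.measurableSpace]) p| ∂ν)
            ≤ C * (n : ℝ) ^ (-(1/2 : ℝ)) := by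
  have hl : (1 - mstar ^ 2) * iteratedDeriv 2 (phiKJ K J) mstar
      = 1 - (1 - mstar ^ 2) * (2 * K * mstar + J) := by
    rw [iteratedDeriv_phiKJ K J hmem]
    have : 1 - mstar ^ 2 ≠ 0 := by nlinarith [hmem.1, hmem.2]
    field_simp
    ring
  have ha2 : 0 < 1 - mstar ^ 2 := by nlinarith [hmem.1, hmem.2]
  have ha1 : |mstar| ≤ 1 := abs_le.2 ⟨hmem.1.le, hmem.2.le⟩
  have hsig := sigmoid_critical hmem hmin
  set v := iteratedDeriv 2 (phiKJ K J) mstar with hv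
  set a := mstar with ha
  have hl0 : 0 < (1 - a ^ 2) * v := mul_pos ha2 hconv
  obtain ⟨C, hC, hmom⟩ := second_moment_le J hK hmem hmin huniq (by rw [← hl]; exact hl0)
  have hD := driftConst_pos J hK
  have hR := rateConst_pos J hK
  set C1 := Real.sqrt v * (2 * rateConst K J + driftConst K J * C) with hC1
  set C2 := 2 / (1 - a ^ 2) * (rateConst K J + (2 + 4 * K + 2 * |J|) * (C + 1)) with hC2
  have hv0 : 0 < Real.sqrt v := Real.sqrt_pos.2 hconv
  have hC1p : 0 < C1 := by positivity
  have hC2p : 0 < C2 := by positivity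
  refine ⟨C1 + C2, by positivity, fun n hn => ?_⟩
  have hmom := hmom n hn
  have hn0 : (0 : ℝ) < n := by exact_mod_cast hn
  have hn1 : (1 : ℝ) ≤ n := by exact_mod_cast hn
  have hs : 0 < Real.sqrt n := Real.sqrt_pos.2 hn0
  have hss : Real.sqrt n * Real.sqrt n = n := Real.mul_self_sqrt hn0.le
  set σ := Real.sqrt (n / v) with hσ
  have hσ0 : 0 < σ := Real.sqrt_pos.2 (by positivity)
  have hσ2 : σ ^ 2 = n / v := Real.sq_sqrt (by positivity)
  have hσ1 : σ = Real.sqrt n / Real.sqrt v := by rw [hσ, Real.sqrt_div hn0.le]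
  set W : (Fin n → Bool) → ℝ := fun x => (totalMag n x - n * a) / σ with hW
  -- the magnetization is recovered from the value `W` takes
  have hWm : ∀ x, a + σ * W x / n = magPP n x := by
    intro x; simp only [hW, magPP]; field_simp; ring
  have hWm' : ∀ x, W x = n * (magPP n x - a) / σ := by
    intro x; simp only [hW, magPP]; field_simp
  have hρ := stepProb_nonneg n K J
  set P : Step n → ℝ × ℝ := fun t => (W t.1, W t.next) with hP
  have hdiff : ∀ t : Step n, W t.1 - W t.next = (totalMag n t.1 - totalMag n t.next) / σ := by
    intro t; simp only [hW]; ring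
  have hmeanInt : ∀ f : ℝ → ℝ, ∫ p, f p.1 ∂(finLaw (stepProb n K J) P)
      = ∑ x, gibbs n K J x * f (W x) := by
    intro f
    rw [integral_finLaw hρ]
    exact sum_stepProb_fst hn K J (fun x => f (W x))
  set g1 : ℝ → ℝ := fun w => drift K J n (a + σ * w / n) / σ with hg1
  set g2 : ℝ → ℝ := fun w => 4 * flipProb K J n (a + σ * w / n) / σ ^ 2 with hg2
  have hg1m : Measurable g1 := by
    have := continuous_drift K J n
    exact (by fun_prop : Continuous g1).measurable
  have hg2m : Measurable g2 := by
    have := continuous_flipProb K J n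
    exact (by fun_prop : Continuous g2).measurable
  have hc1 := condExp_finLaw hρ P (fun p => p.1 - p.2) hg1m (fun G => by
    have h1 := sum_stepProb_diff hn K J (fun x => G (W x) / σ)
    have h2 := sum_stepProb_fst hn K J (fun x => g1 (W x) * G (W x))
    refine Eq.trans (Eq.trans ?_ h1) (Eq.trans ?_ h2.symm)
    · refine Finset.sum_congr rfl fun t _ => ?_
      simp only [hP, hdiff]; ring
    · refine Finset.sum_congr rfl fun x _ => ?_
      simp only [hg1, hWm]; ring)
  have hc2 := condExp_finLaw hρ P (fun p => (p.1 - p.2) ^ 2) hg2m (fun G => by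
    have h1 := sum_stepProb_diff_sq hn K J (fun x => G (W x) / σ ^ 2)
    have h2 := sum_stepProb_fst hn K J (fun x => g2 (W x) * G (W x))
    refine Eq.trans (Eq.trans ?_ h1) (Eq.trans ?_ h2.symm)
    · refine Finset.sum_congr rfl fun t _ => ?_
      simp only [hP, hdiff]; ring
    · refine Finset.sum_congr rfl fun x _ => ?_
      simp only [hg2, hWm]; ring)
  have hpow1 : (n : ℝ) ^ (-(1/2 : ℝ)) = 1 / Real.sqrt n := by
    rw [Real.rpow_neg hn0.le, ← Real.sqrt_eq_rpow, one_div]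
  have hpow3 : (n : ℝ) ^ (-(3/2 : ℝ)) = 1 / (n * Real.sqrt n) := by
    rw [Real.rpow_neg hn0.le, show (3/2 : ℝ) = 1 + 1/2 by norm_num, Real.rpow_add hn0,
      Real.rpow_one, ← Real.sqrt_eq_rpow, one_div]
  refine ⟨finLaw (stepProb n K J) P, ?_, ?_, ?_, ?_, fun p => g1 p.1 - (1 - a ^ 2) * v / n * p.1,
    ?_, ?_, ?_, ?_⟩
  · constructor
    rw [finLaw_apply hρ _ MeasurableSet.univ]
    have := sum_stepProb_fst hn K J (fun _ => (1 : ℝ))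
    simp only [mul_one, sum_gibbs] at this
    simp [this]
  · rw [map_finLaw hρ _ measurable_swap]
    ext s hsm
    rw [finLaw_apply hρ _ hsm, finLaw_apply hρ _ hsm]
    congr 1
    rw [← sum_stepProb_rev n K J (fun t => s.indicator (fun _ => (1 : ℝ)) (P t))]
    refine Finset.sum_congr rfl fun t _ => ?_
    simp only [hP, Step.rev_next]
    rfl
  · rw [map_finLaw hρ _ measurable_fst, cubicMeasure_eq,
      map_finLaw (fun x => (gibbs_pos n K J x).le) _ (measurable_of_finite _)]
    ext s hsm
    rw [finLaw_apply hρ _ hsm, finLaw_apply (fun x => (gibbs_pos n K J x).le) _ hsm]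
    congr 1
    exact sum_stepProb_fst hn K J (fun x => s.indicator (fun _ => (1 : ℝ)) (W x))
  · refine ae_finLaw hρ _ ?_ fun t => ?_
    · exact measurableSet_le (by fun_prop) measurable_const
    · simp only [hP, hdiff]
      rw [abs_div, abs_of_pos hσ0]
      gcongr
      exact abs_totalMag_sub_next_le t
  · exact (hg1m.sub (measurable_id.const_mul _)).comp (comap_measurable _)
  · filter_upwards [hc1] with p hp
    rw [hp]; ring
  · rw [hmeanInt (fun w => |g1 w - (1 - a ^ 2) * v / n * w|), hpow3]
    have hpt : ∀ x : Fin n → Bool, |g1 (W x) - (1 - a ^ 2) * v / n * W x|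
        ≤ (2 * rateConst K J / n + driftConst K J * (magPP n x - a) ^ 2) / σ := by
      intro x
      have h := abs_drift_sub_le J hK hn (abs_magPP_le n hn x) ha1 hsig
      have e : g1 (W x) - (1 - a ^ 2) * v / n * W x = (drift K J n (magPP n x) -
          (1 - (1 - a ^ 2) * (2 * K * a + J)) * (magPP n x - a)) / σ := by
        simp only [hg1, hWm]
        rw [hWm', hl]; field_simp
      rw [e, abs_div, abs_of_pos hσ0]
      gcongr
    calc _ ≤ ∑ x, gibbs n K J x *
          ((2 * rateConst K J / n + driftConst K J * (magPP n x - a) ^ 2) / σ) :=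
          Finset.sum_le_sum fun x _ => mul_le_mul_of_nonneg_left (hpt x) (gibbs_pos n K J x).le
      _ = (2 * rateConst K J / n + driftConst K J *
          ∑ x, gibbs n K J x * (magPP n x - a) ^ 2) / σ := by
          have : 2 * rateConst K J / n = ∑ x, gibbs n K J x * (2 * rateConst K J / n) := by
            rw [← Finset.sum_mul, sum_gibbs, one_mul]
          nth_rw 2 [this]
          rw [Finset.mul_sum, ← Finset.sum_add_distrib, Finset.sum_div]
          exact Finset.sum_congr rfl fun x _ => by ring
      _ ≤ (2 * rateConst K J / n + driftConst K J * (C / n)) / σ := by gcongr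
      _ = C1 * (1 / (n * Real.sqrt n)) := by
          rw [hσ1, hC1]; field_simp
      _ ≤ _ := by gcongr; linarith
  · have hae : (fun p => |1 - (1 / (2 * ((1 - a ^ 2) * v / n))) *
              ((finLaw (stepProb n K J) P)[fun p => (p.1 - p.2) ^ 2 |
                MeasurableSpace.comap (Prod.fst : ℝ × ℝ → ℝ) Real.measurableSpace]) p|)
        =ᵐ[finLaw (stepProb n K J) P]
          fun p => |1 - (1 / (2 * ((1 - a ^ 2) * v / n))) * g2 p.1| := by
      filter_upwards [hc2] with p hp
      rw [hp]
    rw [integral_congr_ae hae,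
      hmeanInt (fun w => |1 - (1 / (2 * ((1 - a ^ 2) * v / n))) * g2 w|), hpow1]
    have hpt : ∀ x : Fin n → Bool, |1 - (1 / (2 * ((1 - a ^ 2) * v / n))) * g2 (W x)|
        ≤ 2 / (1 - a ^ 2) * (rateConst K J / n + (2 + 4 * K + 2 * |J|) * |magPP n x - a|) := by
      intro x
      have h := abs_flipProb_sub_le J hK hn (abs_magPP_le n hn x) ha1 hsig
      have e : 1 - (1 / (2 * ((1 - a ^ 2) * v / n))) * g2 (W x)
          = -(2 / (1 - a ^ 2) * (flipProb K J n (magPP n x) - (1 - a ^ 2) / 2)) := by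
        simp only [hg2, hWm]
        rw [hσ2]; field_simp; ring
      rw [e, abs_neg, abs_mul, abs_of_pos (by positivity : 0 < 2 / (1 - a ^ 2))]
      gcongr
    have habs := sum_gibbs_abs_le hn hmom
    have hn_inv : 1 / (n : ℝ) ≤ 1 / Real.sqrt n := by
      have : 1 ≤ Real.sqrt n := Real.one_le_sqrt.2 hn1
      gcongr
      nlinarith
    calc _ ≤ ∑ x, gibbs n K J x * (2 / (1 - a ^ 2) *
            (rateConst K J / n + (2 + 4 * K + 2 * |J|) * |magPP n x - a|)) :=
          Finset.sum_le_sum fun x _ => mul_le_mul_of_nonneg_left (hpt x) (gibbs_pos n K J x).le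
      _ = 2 / (1 - a ^ 2) * (rateConst K J / n + (2 + 4 * K + 2 * |J|) *
            ∑ x, gibbs n K J x * |magPP n x - a|) := by
          have : rateConst K J / n = ∑ x, gibbs n K J x * (rateConst K J / n) := by
            rw [← Finset.sum_mul, sum_gibbs, one_mul]
          nth_rw 2 [this]
          rw [Finset.mul_sum, ← Finset.sum_add_distrib, Finset.mul_sum]
          exact Finset.sum_congr rfl fun x _ => by ring
      _ ≤ 2 / (1 - a ^ 2) * (rateConst K J * (1 / Real.sqrt n) + (2 + 4 * K + 2 * |J|) *
            ((C + 1) / Real.sqrt n)) := by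
          rw [div_eq_mul_one_div (rateConst K J)]
          gcongr
      _ = C2 * (1 / Real.sqrt n) := by rw [hC2]; ring
      _ ≤ _ := by gcongr; linarith
end
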